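/- arXiv:1712.04549 — 2 statements merged into one kernel-verified Lean document; each statement's English description precedes it below -/
import Mathlib

section
/- Let H be a graph that has no minor isomorphic to K_4, K_{2,3}, C_{3,2}, or A. Then there exists a positive integer k such that H is isomorphic to a minor of 𝒫_k and H is isomorphic to a minor of 𝒬_k. -/
/-!
Common definitions: minors, widths, connectivity, the specific graphs
`K4`, `K23`, `C32`, `graphA`, the binary trees `CT_h`, the graphs `𝒫_k`, `𝒬_k`,
the trees `T_h`, homeomorphic embeddings, cascades, and related notions,
following Dang--Thomas, "Minors of two-connected graphs of large path-width".
-/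

open SimpleGraph

/-- A minor model of `H` in `G`: branch sets `f w` are nonempty, connected,
pairwise disjoint, and edges of `H` are realized by edges of `G` between branch sets. -/
def IsMinorModel {W V : Type*} (H : SimpleGraph W) (G : SimpleGraph V) (f : W → Set V) : Prop :=
  (∀ w, (f w).Nonempty) ∧
  (∀ w, (G.induce (f w)).Connected) ∧
  (∀ w₁ w₂ : W, w₁ ≠ w₂ → Disjoint (f w₁) (f w₂)) ∧
  (∀ w₁ w₂ : W, H.Adj w₁ w₂ → ∃ v₁ ∈ f w₁, ∃ v₂ ∈ f w₂, G.Adj v₁ v₂)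

/-- `H` is (isomorphic to) a minor of `G`. -/
def IsMinor {W V : Type*} (H : SimpleGraph W) (G : SimpleGraph V) : Prop :=
  ∃ f : W → Set V, IsMinorModel H G f

/-- The complete graph on four vertices. -/
def K4 : SimpleGraph (Fin 4) := ⊤

/-- The complete bipartite graph `K_{2,3}`. -/
def K23 : SimpleGraph (Fin 2 ⊕ Fin 3) := completeBipartiteGraph (Fin 2) (Fin 3)

/-- The graph `A`: a cycle `a₁a₂a₃a₄a₅a₆a₁` plus the edges `a₁a₃`, `a₃a₅`, `a₅a₁`. -/
def graphA : SimpleGraph (Fin 6) :=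
  SimpleGraph.fromEdgeSet
    {s(0, 1), s(1, 2), s(2, 3), s(3, 4), s(4, 5), s(5, 0), s(0, 2), s(2, 4), s(4, 0)}

/-- The graph `C_{3,2}`: two disjoint triangles. -/
def C32 : SimpleGraph (Fin 2 × Fin 3) :=
  SimpleGraph.fromRel (fun u v => u.1 = v.1)

/-- A graph is outerplanar iff it has no `K₄` minor and no `K_{2,3}` minor
(the classical characterization of outerplanarity). -/
def Outerplanar {V : Type*} (G : SimpleGraph V) : Prop :=
  ¬ IsMinor K4 G ∧ ¬ IsMinor K23 G

/-- `G` is `k`-connected: it has more than `k` vertices and deleting fewer than `k`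
vertices leaves a connected graph. -/
def IsKConnected {V : Type*} [Fintype V] (k : ℕ) (G : SimpleGraph V) : Prop :=
  k + 1 ≤ Fintype.card V ∧
  ∀ S : Finset V, S.card < k → (G.induce ((↑S : Set V)ᶜ)).Connected

/-- `(Tr, X)` is a tree-decomposition of `G`: `Tr` is a tree, the bags `X t` cover all
vertices and edges (W1), and whenever `t₂` lies on the path of `Tr` between `t₁` and `t₃`
we have `X t₁ ∩ X t₃ ⊆ X t₂` (W2). -/
def IsTreeDecomp {V T : Type*} (G : SimpleGraph V) (Tr : SimpleGraph T) (X : T → Finset V) :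
    Prop :=
  Tr.IsTree ∧
  (∀ v : V, ∃ t, v ∈ X t) ∧
  (∀ u v : V, G.Adj u v → ∃ t, u ∈ X t ∧ v ∈ X t) ∧
  (∀ (t₁ t₂ t₃ : T) (p : Tr.Walk t₁ t₃), p.IsPath → t₂ ∈ p.support →
    ∀ v : V, v ∈ X t₁ → v ∈ X t₃ → v ∈ X t₂)

/-- A path-decomposition of `G`, with bags indexed by `Fin n`. -/
def IsPathDecomp {V : Type*} (G : SimpleGraph V) {n : ℕ} (X : Fin n → Finset V) : Prop :=
  (∀ v : V, ∃ i, v ∈ X i) ∧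
  (∀ u v : V, G.Adj u v → ∃ i, u ∈ X i ∧ v ∈ X i) ∧
  (∀ i j k : Fin n, i ≤ j → j ≤ k → ∀ v : V, v ∈ X i → v ∈ X k → v ∈ X j)

/-- The path-width of a finite graph: the least `w` such that `G` has a
path-decomposition all of whose bags have at most `w + 1` vertices. -/
noncomputable def pathwidth {V : Type*} [Fintype V] (G : SimpleGraph V) : ℕ :=
  sInf {w | ∃ (n : ℕ) (X : Fin n → Finset V), IsPathDecomp G X ∧ ∀ i, (X i).card ≤ w + 1}

/-- The tree-width of a finite graph: the least `w` such that `G` has a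
tree-decomposition all of whose bags have at most `w + 1` vertices. -/
noncomputable def treewidth {V : Type*} [Fintype V] (G : SimpleGraph V) : ℕ :=
  sInf {w | ∃ (T : Type) (_ : Fintype T) (Tr : SimpleGraph T) (X : T → Finset V),
    IsTreeDecomp G Tr X ∧ ∀ t, (X t).card ≤ w + 1}

/-- Vertices of the binary tree `CT_h`: paths from the root, recorded as reversed
lists of left/right moves, of length at most `h`. -/
abbrev CTVert (h : ℕ) := {l : List Bool // l.length ≤ h}

/-- The binary tree `CT_h` of height `h`. -/
def CTgraph (h : ℕ) : SimpleGraph (CTVert h) :=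
  SimpleGraph.fromEdgeSet
    {e | ∃ (b : Bool) (σ : List Bool) (hσ : σ.length < h),
      e = s((⟨σ, le_of_lt hσ⟩ : CTVert h), (⟨b :: σ, by simpa using hσ⟩ : CTVert h))}

/-- The graph `𝒫_k`: the binary tree `CT_k` together with one extra vertex (`none`)
adjacent to every leaf of `CT_k`. -/
def Pgraph (k : ℕ) : SimpleGraph (Option (CTVert k)) :=
  SimpleGraph.fromEdgeSet
    ({e | ∃ (b : Bool) (σ : List Bool) (hσ : σ.length < k),
        e = s(some (⟨σ, le_of_lt hσ⟩ : CTVert k), some (⟨b :: σ, by simpa using hσ⟩ : CTVert k))} ∪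
     {e | ∃ l : CTVert k, l.1.length = k ∧ e = s(none, some l)})

/-- Vertices of `𝒬_k`: the two base vertices of the root triangle (`Sum.inl false` and
`Sum.inl true`), together with one apex vertex for each node of the complete binary tree
of depth `< k` (recorded as a reversed list of moves). -/
abbrev QVert (k : ℕ) := Bool ⊕ {l : List Bool // l.length < k}

/-- The two ends of the base edge of the copy of the triangle at node `σ` of `𝒬_k`. -/
def qbase (k : ℕ) : List Bool → QVert k × QVert k
  | [] => (Sum.inl false, Sum.inl true)
  | b :: σ =>
      ((if b then (qbase k σ).2 else (qbase k σ).1),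
        if h : σ.length < k then Sum.inr ⟨σ, h⟩ else Sum.inl false)

/-- The graph `𝒬_k`, built from triangles as in the recursive definition: the triangle at
node `σ` consists of the base edge `qbase k σ` together with the apex vertex `Sum.inr σ`;
the base edge of `𝒬_k` is `s(Sum.inl false, Sum.inl true)`. -/
def Qgraph (k : ℕ) : SimpleGraph (QVert k) :=
  SimpleGraph.fromEdgeSet
    ({s(Sum.inl false, Sum.inl true)} ∪
     {e | ∃ (σ : List Bool) (h : σ.length < k),
        e = s(Sum.inr ⟨σ, h⟩, (qbase k σ).1) ∨ e = s(Sum.inr ⟨σ, h⟩, (qbase k σ).2)})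

/-- The minor vertices of the tree `T_h` (one for each string of length `≤ h`). -/
abbrev MVert (h : ℕ) := {l : List Bool // l.length ≤ h}

/-- The major vertices of the tree `T_h` (one for each string of length `≤ h - 1`). -/
abbrev JVert (h : ℕ) := {l : List Bool // l.length + 1 ≤ h}

/-- Vertices of the tree `T_h` (obtained from `CT_h` by subdividing every edge not incident
with a degree-one vertex and adding the minor root). -/
abbrev TVert (h : ℕ) := MVert h ⊕ JVert h

/-- The tree `T_h`: each major vertex `σ` is adjacent to the minor vertices `σ` (its parent),
`false :: σ` (its left neighbor) and `true :: σ` (its right neighbor). -/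
def Tgraph (h : ℕ) : SimpleGraph (TVert h) :=
  SimpleGraph.fromEdgeSet
    {e | ∃ (σ : List Bool) (hσ : σ.length + 1 ≤ h),
      e = s(Sum.inr ⟨σ, hσ⟩, Sum.inl ⟨σ, Nat.le_of_succ_le hσ⟩) ∨
      ∃ b : Bool, e = s(Sum.inr ⟨σ, hσ⟩, Sum.inl ⟨b :: σ, by simpa using hσ⟩)}

/-- A homeomorphic embedding of `TA` into `TB`: an injection such that for any two edges of
`TA` sharing an end `t`, the corresponding paths of `TB` are edge-disjoint. -/
def IsHomeoEmb {A B : Type*} (TA : SimpleGraph A) (TB : SimpleGraph B) (η : A → B) : Prop :=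
  Function.Injective η ∧
  ∀ ⦃t t₁ t₂ : A⦄, TA.Adj t t₁ → TA.Adj t t₂ → t₁ ≠ t₂ →
    ∀ (p₁ : TB.Walk (η t) (η t₁)) (p₂ : TB.Walk (η t) (η t₂)),
      p₁.IsPath → p₂.IsPath → ∀ e ∈ p₁.edges, e ∉ p₂.edges

/-- `v` lies in the span of `η`: it lies on a path of `TB` between two vertices in the
image of `η`. -/
def inSpan {A B : Type*} (TB : SimpleGraph B) (η : A → B) (v : B) : Prop :=
  ∃ (a₁ a₂ : A) (p : TB.Walk (η a₁) (η a₂)), p.IsPath ∧ v ∈ p.support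

/-- A cascade of height `h` and size `s` in the tree-decomposition `(Tr, X)`:
a homeomorphic embedding of `T_h` with `|X (η t)| = s` for every minor vertex `t`
and `|X t| ≥ s` for every `t` in the span. -/
def IsCascade {V T : Type*} (Tr : SimpleGraph T) (X : T → Finset V) (h s : ℕ)
    (η : TVert h → T) : Prop :=
  IsHomeoEmb (Tgraph h) Tr η ∧
  (∀ l : MVert h, (X (η (Sum.inl l))).card = s) ∧
  (∀ t : T, inSpan Tr η t → s ≤ (X t).card)

/-- An injective cascade with common intersection set `I`. -/
def IsInjectiveCascade {V T : Type*} (Tr : SimpleGraph T) (X : T → Finset V) (h s : ℕ)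
    (η : TVert h → T) (I : Finset V) : Prop :=
  IsCascade Tr X h s η ∧ I.card < s ∧
  ∀ t t' : TVert h, t ≠ t' → ((X (η t) : Set V) ∩ (X (η t') : Set V)) = (I : Set V)

/-- A family of `s` disjoint paths in `G \ I` (a linkage). -/
def IsLinkage {V : Type*} (G : SimpleGraph V) (I : Finset V) {s : ℕ} {x y : Fin s → V}
    (P : ∀ i : Fin s, G.Walk (x i) (y i)) : Prop :=
  (∀ i, (P i).IsPath) ∧
  (∀ i, ∀ v ∈ (P i).support, v ∉ I) ∧
  (∀ i j, i ≠ j → ∀ v ∈ (P i).support, v ∉ (P j).support)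

/-- An ordered cascade: an injective cascade of size `s + |I|` with common intersection set
`I`, together with orderings `ξ t : Fin s → X (η t) \ I` of the bags at minor vertices, such
that at every major vertex there are left and right linkages connecting corresponding
vertices. -/
def IsOrderedCascade {V T : Type*} (G : SimpleGraph V) (Tr : SimpleGraph T)
    (X : T → Finset V) (h s : ℕ) (η : TVert h → T) (I : Finset V)
    (ξ : MVert h → Fin s → V) : Prop :=
  IsInjectiveCascade Tr X h (s + I.card) η I ∧
  (∀ t : MVert h, Function.Injective (ξ t) ∧
    Set.range (ξ t) = (X (η (Sum.inl t)) : Set V) \ (I : Set V)) ∧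
  ∀ (σ : List Bool) (hσ : σ.length + 1 ≤ h),
    (∃ P : ∀ i : Fin s,
        G.Walk (ξ ⟨σ, Nat.le_of_succ_le hσ⟩ i) (ξ ⟨false :: σ, by simpa using hσ⟩ i),
      IsLinkage G I P) ∧
    (∃ Q : ∀ i : Fin s,
        G.Walk (ξ ⟨σ, Nat.le_of_succ_le hσ⟩ i) (ξ ⟨true :: σ, by simpa using hσ⟩ i),
      IsLinkage G I Q)

/-- The vertex set of the `η`-torso at the major vertex `σ` of `T_h`: the union of the bags
`X t - I` over all `t` such that the path in `Tr` from `t` to `η σ` contains none of the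
images of the three minor neighbors of `σ` as an internal vertex. -/
def torsoSet {V T : Type*} (Tr : SimpleGraph T) (X : T → Finset V) {h : ℕ}
    (η : TVert h → T) (I : Finset V) (σ : List Bool) (hσ : σ.length + 1 ≤ h) : Set V :=
  {v | v ∉ I ∧ ∃ t : T,
    (∀ p : Tr.Walk t (η (Sum.inr ⟨σ, hσ⟩)), p.IsPath →
      ∀ u : T,
        (u = η (Sum.inl ⟨σ, Nat.le_of_succ_le hσ⟩) ∨
         u = η (Sum.inl ⟨false :: σ, by simpa using hσ⟩) ∨
         u = η (Sum.inl ⟨true :: σ, by simpa using hσ⟩)) →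
        u ∈ p.support → u = t ∨ u = η (Sum.inr ⟨σ, hσ⟩)) ∧
    v ∈ X t}

/-- `H` is a tripod in `G` with all vertices in `S`, center `c` and feet `f₁, f₂, f₃`:
the union of three paths from `c` to the feet, pairwise disjoint except for `c`,
at least two of which have length at least one. -/
def IsTripodOn {V : Type*} (G : SimpleGraph V) (S : Set V) (H : G.Subgraph)
    (c f₁ f₂ f₃ : V) : Prop :=
  ∃ (W₁ : G.Walk c f₁) (W₂ : G.Walk c f₂) (W₃ : G.Walk c f₃),
    W₁.IsPath ∧ W₂.IsPath ∧ W₃.IsPath ∧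
    (∀ v ∈ W₁.support, v ∈ S) ∧ (∀ v ∈ W₂.support, v ∈ S) ∧ (∀ v ∈ W₃.support, v ∈ S) ∧
    (∀ v, v ∈ W₁.support → v ∈ W₂.support → v = c) ∧
    (∀ v, v ∈ W₁.support → v ∈ W₃.support → v = c) ∧
    (∀ v, v ∈ W₂.support → v ∈ W₃.support → v = c) ∧
    ((1 ≤ W₁.length ∧ 1 ≤ W₂.length) ∨ (1 ≤ W₁.length ∧ 1 ≤ W₃.length) ∨
      (1 ≤ W₂.length ∧ 1 ≤ W₃.length)) ∧
    H = W₁.toSubgraph ⊔ W₂.toSubgraph ⊔ W₃.toSubgraph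

/-- The major vertex `σ` has property `A_{ij}` in the ordered cascade `η` with orderings
`ξ`: there are two disjoint tripods in the `η`-torso at `σ`, with feet as prescribed. -/
def HasPropA {V T : Type*} (G : SimpleGraph V) (Tr : SimpleGraph T) (X : T → Finset V)
    {h s : ℕ} (η : TVert h → T) (I : Finset V) (ξ : MVert h → Fin s → V)
    (σ : List Bool) (hσ : σ.length + 1 ≤ h) (i j : Fin s) : Prop :=
  ∃ (Li Lj : G.Subgraph) (ci cj : V),
    (∃ m₂ m₃ : Fin s, (m₂ = i ∨ m₂ = j) ∧ (m₃ = i ∨ m₃ = j) ∧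
      IsTripodOn G (torsoSet Tr X η I σ hσ) Li ci
        (ξ ⟨σ, Nat.le_of_succ_le hσ⟩ i)
        (ξ ⟨false :: σ, by simpa using hσ⟩ m₂)
        (ξ ⟨true :: σ, by simpa using hσ⟩ m₃)) ∧
    (∃ m₂ m₃ : Fin s, (m₂ = i ∨ m₂ = j) ∧ (m₃ = i ∨ m₃ = j) ∧
      IsTripodOn G (torsoSet Tr X η I σ hσ) Lj cj
        (ξ ⟨σ, Nat.le_of_succ_le hσ⟩ j)
        (ξ ⟨false :: σ, by simpa using hσ⟩ m₂)
        (ξ ⟨true :: σ, by simpa using hσ⟩ m₃)) ∧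
    Disjoint Li.verts Lj.verts

/-- The major vertex `σ` has property `B_{ij}`: there are two tripods `L_i`, `L_j` in the
`η`-torso at `σ`, with feet `v_{m,1}, v_{m,2}, v_{m,3}` where `{v_{i,y}, v_{j,y}}` equals
`{ξ_{t_y} i, ξ_{t_y} j}` for each `y`, which intersect exactly in a path that is the
intersection of the branch of `L_i` to `v_{i,3}` and the branch of `L_j` to `v_{j,2}`,
and which avoids both centers. -/
def HasPropB {V T : Type*} (G : SimpleGraph V) (Tr : SimpleGraph T) (X : T → Finset V)
    {h s : ℕ} (η : TVert h → T) (I : Finset V) (ξ : MVert h → Fin s → V)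
    (σ : List Bool) (hσ : σ.length + 1 ≤ h) (i j : Fin s) : Prop :=
  ∃ (vi vj : Fin 3 → V) (ci cj : V)
    (Wi : ∀ y : Fin 3, G.Walk ci (vi y)) (Wj : ∀ y : Fin 3, G.Walk cj (vj y)),
    (∀ y : Fin 3, ({vi y, vj y} : Set V) =
      {(![ξ ⟨σ, Nat.le_of_succ_le hσ⟩,
          ξ ⟨false :: σ, by simpa using hσ⟩,
          ξ ⟨true :: σ, by simpa using hσ⟩] : Fin 3 → Fin s → V) y i,
       (![ξ ⟨σ, Nat.le_of_succ_le hσ⟩,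
          ξ ⟨false :: σ, by simpa using hσ⟩,
          ξ ⟨true :: σ, by simpa using hσ⟩] : Fin 3 → Fin s → V) y j}) ∧
    (∀ y, (Wi y).IsPath) ∧ (∀ y, (Wj y).IsPath) ∧
    (∀ y, ∀ v ∈ (Wi y).support, v ∈ torsoSet Tr X η I σ hσ) ∧
    (∀ y, ∀ v ∈ (Wj y).support, v ∈ torsoSet Tr X η I σ hσ) ∧
    (∀ y y' : Fin 3, y ≠ y' → ∀ v, v ∈ (Wi y).support → v ∈ (Wi y').support → v = ci) ∧
    (∀ y y' : Fin 3, y ≠ y' → ∀ v, v ∈ (Wj y).support → v ∈ (Wj y').support → v = cj) ∧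
    ((1 ≤ (Wi 0).length ∧ 1 ≤ (Wi 1).length) ∨ (1 ≤ (Wi 0).length ∧ 1 ≤ (Wi 2).length) ∨
      (1 ≤ (Wi 1).length ∧ 1 ≤ (Wi 2).length)) ∧
    ((1 ≤ (Wj 0).length ∧ 1 ≤ (Wj 1).length) ∨ (1 ≤ (Wj 0).length ∧ 1 ≤ (Wj 2).length) ∨
      (1 ≤ (Wj 1).length ∧ 1 ≤ (Wj 2).length)) ∧
    (((Wi 0).toSubgraph ⊔ (Wi 1).toSubgraph ⊔ (Wi 2).toSubgraph) ⊓
      ((Wj 0).toSubgraph ⊔ (Wj 1).toSubgraph ⊔ (Wj 2).toSubgraph)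
        = (Wi 2).toSubgraph ⊓ (Wj 1).toSubgraph) ∧
    ∃ (x y : V) (p : G.Walk x y), p.IsPath ∧
      (Wi 2).toSubgraph ⊓ (Wj 1).toSubgraph = p.toSubgraph ∧
      ci ∉ p.support ∧ cj ∉ p.support

/-- The major vertex `σ` has property `AB_{ij}`: in the `η`-torso at `σ` there are disjoint
paths `L_i, L_j` from `ξ_{t₁}(m)` to `ξ_{t₂}(m)` and disjoint paths `R_i, R_j` from
`ξ_{t₁}(m)` to `ξ_{t₃}(m)`, for `m ∈ {i, j}`. -/
def HasPropAB {V T : Type*} (G : SimpleGraph V) (Tr : SimpleGraph T) (X : T → Finset V)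
    {h s : ℕ} (η : TVert h → T) (I : Finset V) (ξ : MVert h → Fin s → V)
    (σ : List Bool) (hσ : σ.length + 1 ≤ h) (i j : Fin s) : Prop :=
  ∃ (Li : G.Walk (ξ ⟨σ, Nat.le_of_succ_le hσ⟩ i) (ξ ⟨false :: σ, by simpa using hσ⟩ i))
    (Lj : G.Walk (ξ ⟨σ, Nat.le_of_succ_le hσ⟩ j) (ξ ⟨false :: σ, by simpa using hσ⟩ j))
    (Ri : G.Walk (ξ ⟨σ, Nat.le_of_succ_le hσ⟩ i) (ξ ⟨true :: σ, by simpa using hσ⟩ i))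
    (Rj : G.Walk (ξ ⟨σ, Nat.le_of_succ_le hσ⟩ j) (ξ ⟨true :: σ, by simpa using hσ⟩ j)),
    Li.IsPath ∧ Lj.IsPath ∧ Ri.IsPath ∧ Rj.IsPath ∧
    (∀ v ∈ Li.support, v ∈ torsoSet Tr X η I σ hσ) ∧
    (∀ v ∈ Lj.support, v ∈ torsoSet Tr X η I σ hσ) ∧
    (∀ v ∈ Ri.support, v ∈ torsoSet Tr X η I σ hσ) ∧
    (∀ v ∈ Rj.support, v ∈ torsoSet Tr X η I σ hσ) ∧
    (∀ v ∈ Li.support, v ∉ Lj.support) ∧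
    (∀ v ∈ Ri.support, v ∉ Rj.support)

/-- A monotone homeomorphic embedding `T_a ↪ T_h`: the minor root maps to the minor root,
and for every major vertex with trinity `(t₁, t₂, t₃)`, the images of `t₂` and `t₃` are the
left and right neighbors of the (major) image of the vertex. -/
def IsMonotoneEmb (a h : ℕ) (γ : TVert a → TVert h) : Prop :=
  IsHomeoEmb (Tgraph a) (Tgraph h) γ ∧
  γ (Sum.inl ⟨[], Nat.zero_le a⟩) = Sum.inl ⟨[], Nat.zero_le h⟩ ∧
  ∀ (σ : List Bool) (hσ : σ.length + 1 ≤ a),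
    ∃ (τ : List Bool) (hτ : τ.length + 1 ≤ h),
      γ (Sum.inr ⟨σ, hσ⟩) = Sum.inr ⟨τ, hτ⟩ ∧
      γ (Sum.inl ⟨false :: σ, by simpa using hσ⟩) = Sum.inl ⟨false :: τ, by simpa using hτ⟩ ∧
      γ (Sum.inl ⟨true :: σ, by simpa using hσ⟩) = Sum.inl ⟨true :: τ, by simpa using hτ⟩


/-! ### Connectivity helpers -/

def Conn {V : Type*} (G : SimpleGraph V) (s : Set V) : Prop := (G.induce s).Connected

def Stp {V : Type*} (G : SimpleGraph V) (s : Set V) (u v : V) : Prop :=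
  G.Adj u v ∧ u ∈ s ∧ v ∈ s

lemma stp_symm {V : Type*} {G : SimpleGraph V} {s : Set V} {a b : V}
    (h : Relation.ReflTransGen (Stp G s) a b) : Relation.ReflTransGen (Stp G s) b a := by
  induction h with
  | refl => exact .refl
  | tail _ h2 ih => exact Relation.ReflTransGen.head ⟨h2.1.symm, h2.2.2, h2.2.1⟩ ih

lemma stp_mono {V : Type*} {G : SimpleGraph V} {s t : Set V} (hst : s ⊆ t) {a b : V}
    (h : Relation.ReflTransGen (Stp G s) a b) : Relation.ReflTransGen (Stp G t) a b :=
  Relation.ReflTransGen.mono (fun _ _ h => ⟨h.1, hst h.2.1, hst h.2.2⟩) _ _ h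

lemma conn_of_root {V : Type*} {G : SimpleGraph V} {s : Set V} (a : V) (ha : a ∈ s)
    (h : ∀ b ∈ s, Relation.ReflTransGen (Stp G s) a b) : Conn G s := by
  have key : ∀ b, Relation.ReflTransGen (Stp G s) a b → ∀ hb : b ∈ s,
      (G.induce s).Reachable ⟨a, ha⟩ ⟨b, hb⟩ := by
    intro b hb
    induction hb with
    | refl => intro _; exact SimpleGraph.Reachable.refl _
    | tail _ h2 ih =>
      intro hb
      refine (ih h2.2.1).trans ?_
      apply SimpleGraph.Adj.reachable
      exact h2.1
  have : Nonempty s := ⟨⟨a, ha⟩⟩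
  refine SimpleGraph.Connected.mk ?_
  intro x y
  exact (key x (h x x.2) x.2).symm.trans (key y (h y y.2) y.2)

lemma Conn.nonempty {V : Type*} {G : SimpleGraph V} {s : Set V} (h : Conn G s) : s.Nonempty := by
  obtain ⟨x⟩ := SimpleGraph.Connected.nonempty h
  exact ⟨x, x.2⟩

lemma Conn.stp {V : Type*} {G : SimpleGraph V} {s : Set V} (h : Conn G s) {a b : V}
    (ha : a ∈ s) (hb : b ∈ s) : Relation.ReflTransGen (Stp G s) a b := by
  have h1 := SimpleGraph.Connected.preconnected h ⟨a, ha⟩ ⟨b, hb⟩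
  rw [SimpleGraph.reachable_iff_reflTransGen] at h1
  have := Relation.ReflTransGen.lift (p := Stp G s) (Subtype.val) (fun x y hxy => ⟨hxy, x.2, y.2⟩) _ _ h1
  exact this

lemma conn_singleton {V : Type*} (G : SimpleGraph V) (a : V) : Conn G {a} :=
  conn_of_root a rfl (by rintro b rfl; exact .refl)

lemma Conn.union_adj {V : Type*} {G : SimpleGraph V} {s t : Set V} (hs : Conn G s)
    (ht : Conn G t) {a b : V} (ha : a ∈ s) (hb : b ∈ t) (hab : G.Adj a b) : Conn G (s ∪ t) := by
  refine conn_of_root a (Or.inl ha) ?_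
  rintro c (hc | hc)
  · exact stp_mono Set.subset_union_left (hs.stp ha hc)
  · exact Relation.ReflTransGen.head ⟨hab, Or.inl ha, Or.inr hb⟩
      (stp_mono Set.subset_union_right (ht.stp hb hc))

lemma Conn.union_mem {V : Type*} {G : SimpleGraph V} {s t : Set V} (hs : Conn G s)
    (ht : Conn G t) {a : V} (ha : a ∈ s) (hb : a ∈ t) : Conn G (s ∪ t) := by
  refine conn_of_root a (Or.inl ha) ?_
  rintro c (hc | hc)
  · exact stp_mono Set.subset_union_left (hs.stp ha hc)
  · exact stp_mono Set.subset_union_right (ht.stp hb hc)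

def Adjs {V : Type*} (G : SimpleGraph V) (s t : Set V) : Prop :=
  ∃ a ∈ s, ∃ b ∈ t, G.Adj a b

lemma Adjs.symm {V : Type*} {G : SimpleGraph V} {s t : Set V} (h : Adjs G s t) : Adjs G t s := by
  obtain ⟨a, ha, b, hb, h⟩ := h
  exact ⟨b, hb, a, ha, h.symm⟩

lemma conn_biUnion {U V : Type*} {G : SimpleGraph U} {G' : SimpleGraph V} {φ : U → Set V}
    (hφ : IsMinorModel G G' φ) {s : Set U} (hs : Conn G s) : Conn G' (⋃ u ∈ s, φ u) := by
  obtain ⟨u0, hu0⟩ := hs.nonempty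
  obtain ⟨a, ha⟩ := hφ.1 u0
  have hsub : ∀ u ∈ s, φ u ⊆ ⋃ u ∈ s, φ u := fun u hu => Set.subset_biUnion_of_mem hu
  refine conn_of_root a (hsub u0 hu0 ha) ?_
  have key : ∀ u, Relation.ReflTransGen (Stp G s) u0 u → u ∈ s → ∀ b ∈ φ u,
      Relation.ReflTransGen (Stp G' (⋃ u ∈ s, φ u)) a b := by
    intro u hu
    induction hu with
    | refl => intro h b hb; exact stp_mono (hsub u0 h) (Conn.stp (hφ.2.1 u0) ha hb)
    | @tail u1 u2 _ h2 ih =>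
      intro h b hb
      obtain ⟨c, hc, d, hd, hcd⟩ := hφ.2.2.2 _ _ h2.1
      refine (ih h2.2.1 c hc).trans (Relation.ReflTransGen.head ⟨hcd, hsub _ h2.2.1 hc, hsub _ h hd⟩ ?_)
      exact stp_mono (hsub u2 h) (Conn.stp (hφ.2.1 u2) hd hb)
  intro b hb
  simp only [Set.mem_iUnion] at hb
  obtain ⟨u, hu, hb⟩ := hb
  exact key u (hs.stp hu0 hu) hu b hb

lemma IsMinor.trans' {W U V : Type*} {K : SimpleGraph W} {G : SimpleGraph U} {G' : SimpleGraph V}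
    (h1 : IsMinor K G) (h2 : IsMinor G G') : IsMinor K G' := by
  obtain ⟨f, hf⟩ := h1
  obtain ⟨φ, hφ⟩ := h2
  refine ⟨fun w => ⋃ u ∈ f w, φ u, ?_, ?_, ?_, ?_⟩
  · intro w; exact (conn_biUnion hφ (hf.2.1 w)).nonempty
  · intro w; exact conn_biUnion hφ (hf.2.1 w)
  · intro w1 w2 hne
    rw [Set.disjoint_left]
    intro a h1 h2
    simp only [Set.mem_iUnion] at h1 h2
    obtain ⟨u1, hu1, ha1⟩ := h1
    obtain ⟨u2, hu2, ha2⟩ := h2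
    have hu : u1 ≠ u2 := by
      rintro rfl
      exact Set.disjoint_left.1 (hf.2.2.1 _ _ hne) hu1 hu2
    exact Set.disjoint_left.1 (hφ.2.2.1 _ _ hu) ha1 ha2
  · intro w1 w2 h
    obtain ⟨u1, h1, u2, h2, h12⟩ := hf.2.2.2 _ _ h
    obtain ⟨a, ha, b, hb, hab⟩ := hφ.2.2.2 _ _ h12
    exact ⟨a, Set.mem_biUnion h1 ha, b, Set.mem_biUnion h2 hb, hab⟩

/-- Adding one vertex of degree at most one. -/
lemma extend_pendant {V : Type*} {H : SimpleGraph V} {U U' : Type*} {G : SimpleGraph U}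
    {G' : SimpleGraph U'} (hU : Nonempty U) (x y : V) (hx : ∀ w, H.Adj x w → w = y)
    (hm : IsMinor (H.induce {x}ᶜ) G) (φ : U → Set U') (hφ : IsMinorModel G G' φ)
    (hs : ∀ u, ∃ s, (∀ u', s ∉ φ u') ∧ ∃ a ∈ φ u, G'.Adj s a) : IsMinor H G' := by
  classical
  obtain ⟨f, hf⟩ := hm
  obtain ⟨u0, hu0⟩ : ∃ u : U, ∀ h : y ≠ x, u ∈ f ⟨y, h⟩ := by
    by_cases h : y = x
    · obtain ⟨u⟩ := hU
      exact ⟨u, fun h' => absurd h h'⟩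
    · obtain ⟨u, hu⟩ := hf.1 ⟨y, h⟩
      exact ⟨u, fun _ => hu⟩
  obtain ⟨s, hs1, a, ha, hsa⟩ := hs u0
  set g : V → Set U' := fun w => if h : w = x then {s} else ⋃ u ∈ f ⟨w, h⟩, φ u with hg
  have gx : g x = {s} := by simp [hg]
  have gw : ∀ w (h : w ≠ x), g w = ⋃ u ∈ f ⟨w, h⟩, φ u := by
    intro w h; simp [hg, h]
  have sn : ∀ w, w ≠ x → s ∉ g w := by
    intro w h; rw [gw w h]; simp only [Set.mem_iUnion]; rintro ⟨u, _, hu⟩; exact hs1 u hu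
  have cg : ∀ w, Conn G' (g w) := by
    intro w
    by_cases h : w = x
    · rw [h, gx]; exact conn_singleton _ _
    · rw [gw w h]; exact conn_biUnion hφ (hf.2.1 _)
  have ex : ∀ w, H.Adj x w → ∃ v₂ ∈ g w, G'.Adj s v₂ := by
    intro w hw
    have h1 := hx w hw
    have h2 : w ≠ x := hw.ne'
    subst h1
    refine ⟨a, ?_, hsa⟩
    rw [gw w h2]
    exact Set.mem_biUnion (hu0 h2) ha
  refine ⟨g, fun w => (cg w).nonempty, cg, ?_, ?_⟩
  · intro w1 w2 hne
    rw [Set.disjoint_left]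
    intro b h1 h2
    by_cases e1 : w1 = x
    · subst e1
      rw [gx] at h1
      rw [Set.mem_singleton_iff.1 h1] at h2
      exact sn w2 hne.symm h2
    · by_cases e2 : w2 = x
      · subst e2
        rw [gx] at h2
        rw [Set.mem_singleton_iff.1 h2] at h1
        exact sn w1 hne h1
      · rw [gw _ e1] at h1
        rw [gw _ e2] at h2
        simp only [Set.mem_iUnion] at h1 h2
        obtain ⟨u1, hu1, ha1⟩ := h1
        obtain ⟨u2, hu2, ha2⟩ := h2
        have hu : u1 ≠ u2 := by
          rintro rfl
          refine Set.disjoint_left.1 (hf.2.2.1 ⟨w1, e1⟩ ⟨w2, e2⟩ ?_) hu1 hu2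
          intro h; exact hne (congrArg Subtype.val h)
        exact Set.disjoint_left.1 (hφ.2.2.1 _ _ hu) ha1 ha2
  · intro w1 w2 h
    by_cases e1 : w1 = x
    · subst e1
      obtain ⟨b, hb, hsb⟩ := ex w2 h
      exact ⟨s, by rw [gx]; rfl, b, hb, hsb⟩
    · by_cases e2 : w2 = x
      · subst e2
        obtain ⟨b, hb, hsb⟩ := ex w1 h.symm
        exact ⟨b, hb, s, by rw [gx]; rfl, hsb.symm⟩
      · obtain ⟨u1, h1, u2, h2, h12⟩ := hf.2.2.2 ⟨w1, e1⟩ ⟨w2, e2⟩ h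
        obtain ⟨a, ha, b, hb, hab⟩ := hφ.2.2.2 _ _ h12
        rw [gw _ e1, gw _ e2]
        exact ⟨a, Set.mem_biUnion h1 ha, b, Set.mem_biUnion h2 hb, hab⟩

/-! ### Builders for the small minors -/

lemma K4_of {V : Type*} {H : SimpleGraph V} {A B C D : Set V} (cA : Conn H A) (cB : Conn H B)
    (cC : Conn H C) (cD : Conn H D) (dAB : Disjoint A B) (dAC : Disjoint A C) (dAD : Disjoint A D)
    (dBC : Disjoint B C) (dBD : Disjoint B D) (dCD : Disjoint C D)
    (aAB : Adjs H A B) (aAC : Adjs H A C) (aAD : Adjs H A D)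
    (aBC : Adjs H B C) (aBD : Adjs H B D) (aCD : Adjs H C D) : IsMinor K4 H := by
  have c : ∀ w, Conn H (![A, B, C, D] w) := by
    intro w; fin_cases w <;> assumption
  refine ⟨![A, B, C, D], fun w => (c w).nonempty, c, ?_, ?_⟩
  · intro w1 w2 h
    fin_cases w1 <;> fin_cases w2 <;> first | exact absurd rfl h | assumption | (apply Disjoint.symm; assumption)
  · intro w1 w2 h
    have h := h.ne
    fin_cases w1 <;> fin_cases w2 <;> first | exact absurd rfl h | assumption | (apply Adjs.symm; assumption)

lemma K23_of {V : Type*} {H : SimpleGraph V} {A B C D E : Set V} (cA : Conn H A) (cB : Conn H B)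
    (cC : Conn H C) (cD : Conn H D) (cE : Conn H E)
    (dAB : Disjoint A B) (dAC : Disjoint A C) (dAD : Disjoint A D) (dAE : Disjoint A E)
    (dBC : Disjoint B C) (dBD : Disjoint B D) (dBE : Disjoint B E)
    (dCD : Disjoint C D) (dCE : Disjoint C E) (dDE : Disjoint D E)
    (aAC : Adjs H A C) (aAD : Adjs H A D) (aAE : Adjs H A E)
    (aBC : Adjs H B C) (aBD : Adjs H B D) (aBE : Adjs H B E) : IsMinor K23 H := by
  have c : ∀ w, Conn H ((Sum.elim ![A, B] ![C, D, E] : Fin 2 ⊕ Fin 3 → Set V) w) := by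
    rintro (w | w) <;> fin_cases w <;> assumption
  refine ⟨Sum.elim ![A, B] ![C, D, E], fun w => (c w).nonempty, c, ?_, ?_⟩
  · rintro (w1 | w1) (w2 | w2) h <;> fin_cases w1 <;> fin_cases w2 <;>
      first | exact absurd rfl h | assumption | (apply Disjoint.symm; assumption)
  · rintro (w1 | w1) (w2 | w2) h
    · simp [K23, completeBipartiteGraph] at h
    · fin_cases w1 <;> fin_cases w2 <;> assumption
    · fin_cases w1 <;> fin_cases w2 <;> (apply Adjs.symm; assumption)
    · simp [K23, completeBipartiteGraph] at h

lemma C32_of {V : Type*} {H : SimpleGraph V} {A B C D E F : Set V} (cA : Conn H A) (cB : Conn H B)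
    (cC : Conn H C) (cD : Conn H D) (cE : Conn H E) (cF : Conn H F)
    (dAB : Disjoint A B) (dAC : Disjoint A C) (dBC : Disjoint B C)
    (dDE : Disjoint D E) (dDF : Disjoint D F) (dEF : Disjoint E F)
    (S T : Set V) (hST : Disjoint S T) (hA : A ⊆ S) (hB : B ⊆ S) (hC : C ⊆ S)
    (hD : D ⊆ T) (hE : E ⊆ T) (hF : F ⊆ T)
    (aAB : Adjs H A B) (aAC : Adjs H A C) (aBC : Adjs H B C)
    (aDE : Adjs H D E) (aDF : Adjs H D F) (aEF : Adjs H E F) : IsMinor C32 H := by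
  have c : ∀ w : Fin 2 × Fin 3, Conn H (![![A, B, C], ![D, E, F]] w.1 w.2) := by
    rintro ⟨w, w'⟩; fin_cases w <;> fin_cases w' <;> assumption
  refine ⟨fun w => ![![A, B, C], ![D, E, F]] w.1 w.2, fun w => (c w).nonempty, c, ?_, ?_⟩
  · rintro ⟨u, u'⟩ ⟨w, w'⟩ h
    fin_cases u <;> fin_cases u' <;> fin_cases w <;> fin_cases w' <;>
      first | exact absurd rfl h | assumption | (apply Disjoint.symm; assumption) | (refine hST.mono ?_ ?_ <;> assumption) | (refine hST.symm.mono ?_ ?_ <;> assumption)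
  · rintro ⟨u, u'⟩ ⟨w, w'⟩ h
    simp only [C32, SimpleGraph.fromRel_adj] at h
    fin_cases u <;> fin_cases u' <;> fin_cases w <;> fin_cases w' <;>
      first | exact absurd rfl h.1 | assumption | (apply Adjs.symm; assumption) | (exfalso; simp at h)

lemma A_of {V : Type*} {H : SimpleGraph V} {A B C D E F : Set V} (cA : Conn H A) (cB : Conn H B)
    (cC : Conn H C) (cD : Conn H D) (cE : Conn H E) (cF : Conn H F)
    (dAB : Disjoint A B) (dAC : Disjoint A C) (dAD : Disjoint A D) (dAE : Disjoint A E)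
    (dAF : Disjoint A F)
    (dBC : Disjoint B C) (dBD : Disjoint B D) (dBE : Disjoint B E) (dBF : Disjoint B F)
    (dCD : Disjoint C D) (dCE : Disjoint C E) (dCF : Disjoint C F)
    (dDE : Disjoint D E) (dDF : Disjoint D F) (dEF : Disjoint E F)
    (a01 : Adjs H A B) (a12 : Adjs H B C) (a23 : Adjs H C D) (a34 : Adjs H D E)
    (a45 : Adjs H E F) (a50 : Adjs H F A) (a02 : Adjs H A C) (a24 : Adjs H C E)
    (a40 : Adjs H E A) : IsMinor graphA H := by
  have c : ∀ w : Fin 6, Conn H (![A, B, C, D, E, F] w) := by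
    intro w; fin_cases w <;> assumption
  refine ⟨![A, B, C, D, E, F], fun w => (c w).nonempty, c, ?_, ?_⟩
  · intro u w h
    fin_cases u <;> fin_cases w <;>
      first | exact absurd rfl h | assumption | (apply Disjoint.symm; assumption)
  · intro u w h
    simp only [graphA, SimpleGraph.fromEdgeSet_adj] at h
    fin_cases u <;> fin_cases w <;>
      first | exact absurd rfl h.2 | assumption | (apply Adjs.symm; assumption) | (exfalso; simp at h)

/-! ### Path sequences and cycles -/

def PS {V : Type*} (H : SimpleGraph V) (n : ℕ) (p : ℕ → V) : Prop :=
  (∀ i j, i < n → j < n → p i = p j → i = j) ∧ ∀ i, i + 1 < n → H.Adj (p i) (p (i + 1))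

def Cyc {V : Type*} (H : SimpleGraph V) (n : ℕ) (p : ℕ → V) : Prop :=
  3 ≤ n ∧ PS H n p ∧ H.Adj (p (n - 1)) (p 0)

def HasCyc {V : Type*} (H : SimpleGraph V) (S : Set V) : Prop :=
  ∃ n p, Cyc H n p ∧ ∀ i < n, p i ∈ S

def seg {V : Type*} (p : ℕ → V) (i j : ℕ) : Set V := {v | ∃ k, i ≤ k ∧ k ≤ j ∧ p k = v}

lemma mem_seg {V : Type*} (p : ℕ → V) {i j k : ℕ} (h1 : i ≤ k) (h2 : k ≤ j) : p k ∈ seg p i j :=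
  ⟨k, h1, h2, rfl⟩

lemma seg_conn {V : Type*} {H : SimpleGraph V} {n : ℕ} {p : ℕ → V} (h : PS H n p) {i j : ℕ}
    (hij : i ≤ j) (hj : j < n) : Conn H (seg p i j) := by
  refine conn_of_root (p i) (mem_seg p le_rfl hij) ?_
  rintro b ⟨k, h1, h2, rfl⟩
  obtain ⟨d, rfl⟩ := Nat.exists_eq_add_of_le h1
  clear h1
  induction d with
  | zero => exact .refl
  | succ d ih =>
    refine (ih (by omega)).tail ⟨h.2 (i + d) (by omega), mem_seg p (by omega) (by omega),
      mem_seg p (by omega) (by omega)⟩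

lemma seg_disj {V : Type*} {H : SimpleGraph V} {n : ℕ} {p : ℕ → V} (h : PS H n p) {i j k l : ℕ}
    (hjk : j < k) (hl : l < n) : Disjoint (seg p i j) (seg p k l) := by
  rw [Set.disjoint_left]
  rintro a ⟨x, h1, h2, rfl⟩ ⟨y, h3, h4, h5⟩
  have := h.1 y x (by omega) (by omega) h5
  omega

lemma disj_singleton_seg {V : Type*} {p : ℕ → V} {i j : ℕ} {a : V}
    (h : ∀ k, i ≤ k → k ≤ j → p k ≠ a) : Disjoint {a} (seg p i j) := by
  rw [Set.disjoint_left]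
  rintro b rfl ⟨k, h1, h2, h3⟩
  exact h k h1 h2 h3

lemma disj_seg_seg {V : Type*} {p q : ℕ → V} {i j k l : ℕ}
    (h : ∀ a b, i ≤ a → a ≤ j → k ≤ b → b ≤ l → p a ≠ q b) : Disjoint (seg p i j) (seg q k l) := by
  rw [Set.disjoint_left]
  rintro b ⟨x, h1, h2, rfl⟩ ⟨y, h3, h4, h5⟩
  exact h x y h1 h2 h3 h4 h5.symm

lemma PS.rev {V : Type*} {H : SimpleGraph V} {n : ℕ} {p : ℕ → V} (h : PS H n p) :
    PS H n (fun i => p (n - 1 - i)) := by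
  refine ⟨fun i j hi hj hij => ?_, fun i hi => ?_⟩
  · have := h.1 _ _ (by omega) (by omega) hij
    omega
  · have := h.2 (n - 1 - (i + 1)) (by omega)
    rw [show n - 1 - (i + 1) + 1 = n - 1 - i by omega] at this
    exact this.symm

lemma PS.snoc {V : Type*} {H : SimpleGraph V} {n : ℕ} {p : ℕ → V} (h : PS H n p) (hn : 1 ≤ n) {u : V}
    (hu : ∀ i < n, p i ≠ u) (ha : H.Adj (p (n - 1)) u) :
    PS H (n + 1) (fun i => if i < n then p i else u) := by
  refine ⟨fun i j hi hj hij => ?_, fun i hi => ?_⟩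
  · dsimp only at hij
    split_ifs at hij with h1 h2 h2
    · exact h.1 _ _ h1 h2 hij
    · exact absurd hij (hu i h1)
    · exact absurd hij.symm (hu j h2)
    · omega
  · dsimp only
    rw [if_pos (by omega)]
    split_ifs with h1
    · exact h.2 i h1
    · rw [show i = n - 1 by omega]; exact ha

lemma PS.sub {V : Type*} {H : SimpleGraph V} {n : ℕ} {p : ℕ → V} (h : PS H n p) {i m : ℕ}
    (hm : i + m ≤ n) : PS H m (fun t => p (i + t)) := by
  refine ⟨fun a b ha hb hab => ?_, fun a ha => ?_⟩
  · have := h.1 _ _ (by omega) (by omega) hab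
    omega
  · exact h.2 (i + a) (by omega)

lemma PS.chord {V : Type*} {H : SimpleGraph V} {n : ℕ} {p : ℕ → V} (h : PS H n p) {i j : ℕ}
    (hij : i + 2 ≤ j) (hj : j < n) (ha : H.Adj (p j) (p i)) :
    Cyc H (j - i + 1) (fun t => p (i + t)) := by
  refine ⟨by omega, h.sub (by omega), ?_⟩
  simpa [show i + (j - i) = j by omega] using ha

lemma PS.le_card {V : Type*} [Fintype V] {H : SimpleGraph V} {n : ℕ} {p : ℕ → V} (h : PS H n p) :
    n ≤ Fintype.card V := by
  have : Function.Injective (fun i : Fin n => p i) := by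
    intro i j hij
    exact Fin.ext (h.1 i j i.2 j.2 hij)
  simpa using Fintype.card_le_of_injective _ this

lemma exists_longest {V : Type*} [Fintype V] {H : SimpleGraph V} (R : ℕ → (ℕ → V) → Prop)
    (h : ∃ n p, PS H n p ∧ R n p) :
    ∃ n p, PS H n p ∧ R n p ∧ ∀ m q, PS H m q → R m q → m ≤ n := by
  classical
  let Q : ℕ → Prop := fun n => ∃ p, PS H n p ∧ R n p
  obtain ⟨n, p, hp⟩ := h
  have hb := hp.1.le_card
  obtain ⟨p', h1, h2⟩ : Q (Nat.findGreatest Q (Fintype.card V)) :=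
    Nat.findGreatest_spec (P := Q) hb ⟨p, hp⟩
  refine ⟨_, p', h1, h2, fun m q hq hr => ?_⟩
  exact Nat.le_findGreatest hq.le_card ⟨q, hq, hr⟩

/-- the last vertex of a non-extendable path in an acyclic set. -/
lemma end_nbr {V : Type*} {H : SimpleGraph V} {S : Set V} {n : ℕ} {p : ℕ → V} (h : PS H n p)
    (hn : 1 ≤ n) (hS : ∀ i < n, p i ∈ S) (hc : ¬ HasCyc H S)
    (hmax : ∀ u ∈ S, H.Adj (p (n - 1)) u → ∃ i < n, p i = u) :
    ∀ u ∈ S, H.Adj (p (n - 1)) u → 2 ≤ n ∧ u = p (n - 2) := by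
  intro u hu ha
  obtain ⟨i, hi, rfl⟩ := hmax u hu ha
  have hne : i ≠ n - 1 := by
    rintro rfl; exact ha.ne rfl
  by_cases h2 : i + 2 ≤ n - 1
  · exfalso
    refine hc ⟨_, _, h.chord h2 (by omega) ha, fun t ht => hS _ (by omega)⟩
  · refine ⟨by omega, ?_⟩
    rw [show i = n - 2 by omega]

lemma Cyc.rotate {V : Type*} {H : SimpleGraph V} {n : ℕ} {p : ℕ → V} (h : Cyc H n p) {r : ℕ}
    (hr : r < n) : ∃ p', Cyc H n p' ∧ p' 0 = p r ∧
      ∀ v, (∃ i < n, p' i = v) ↔ (∃ i < n, p i = v) := by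
  obtain ⟨h3, hp, hl⟩ := h
  refine ⟨fun i => if i + r < n then p (i + r) else p (i + r - n), ⟨h3, ⟨?_, ?_⟩, ?_⟩, ?_, ?_⟩
  · intro i j hi hj hij
    dsimp only at hij
    split_ifs at hij with h1 h2 h2 <;> have := hp.1 _ _ (by omega) (by omega) hij <;> omega
  · intro i hi
    dsimp only
    split_ifs with h1 h2 h2
    · have := hp.2 (i + r) (by omega)
      rwa [show i + 1 + r = i + r + 1 by omega]
    · rw [show i + r = n - 1 by omega, show i + 1 + r - n = 0 by omega]; exact hl
    · omega
    · have := hp.2 (i + r - n) (by omega)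
      rwa [show i + 1 + r - n = i + r - n + 1 by omega]
  · dsimp only
    rw [if_pos (show 0 + r < n by omega)]
    split_ifs with h1
    · rw [show n - 1 + r = n - 1 by omega, show 0 + r = 0 by omega]; exact hl
    · have := hp.2 (r - 1) (by omega)
      rw [show n - 1 + r - n = r - 1 by omega, show 0 + r = r - 1 + 1 by omega]; exact this
  · simp [hr]
  · intro v
    constructor
    · rintro ⟨i, hi, rfl⟩
      dsimp only
      split_ifs with h1
      · exact ⟨_, h1, rfl⟩
      · exact ⟨i + r - n, by omega, rfl⟩
    · rintro ⟨i, hi, rfl⟩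
      by_cases h1 : r ≤ i
      · refine ⟨i - r, by omega, ?_⟩
        dsimp only
        rw [if_pos (by omega), show i - r + r = i by omega]
      · refine ⟨i + n - r, by omega, ?_⟩
        dsimp only
        rw [if_neg (by omega), show i + n - r + r - n = i by omega]

/-- reversal of a cycle fixing the base vertex -/
lemma Cyc.rev {V : Type*} {H : SimpleGraph V} {n : ℕ} {p : ℕ → V} (h : Cyc H n p) :
    Cyc H n (fun i => if i = 0 then p 0 else p (n - i)) := by
  obtain ⟨h3, hp, hl⟩ := h
  refine ⟨h3, ⟨?_, ?_⟩, ?_⟩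
  · intro i j hi hj hij
    dsimp only at hij
    split_ifs at hij with h1 h2 h2 <;> try have := hp.1 _ _ (by omega) (by omega) hij
    all_goals omega
  · intro i hi
    dsimp only
    rw [if_neg (show i + 1 ≠ 0 by omega)]
    split_ifs with h1
    · subst h1; exact hl.symm
    · have := hp.2 (n - (i + 1)) (by omega)
      rw [show n - (i + 1) + 1 = n - i by omega] at this
      exact this.symm
  · dsimp only
    rw [if_neg (by omega), if_pos rfl, show n - (n - 1) = 1 by omega]
    exact (hp.2 0 (by omega)).symm

/-- a vertex on a cycle has two distinct neighbours on it -/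
lemma Cyc.two_nbrs {V : Type*} {H : SimpleGraph V} {n : ℕ} {p : ℕ → V} (h : Cyc H n p) {r : ℕ}
    (hr : r < n) : ∃ i j, i < n ∧ j < n ∧ p i ≠ p j ∧ H.Adj (p r) (p i) ∧ H.Adj (p r) (p j) := by
  obtain ⟨p', hc, h0, hiff⟩ := h.rotate hr
  obtain ⟨h3, hp, hl⟩ := hc
  obtain ⟨i, hi, hi'⟩ := (hiff (p' 1)).1 ⟨1, by omega, rfl⟩
  obtain ⟨j, hj, hj'⟩ := (hiff (p' (n - 1))).1 ⟨n - 1, by omega, rfl⟩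
  refine ⟨i, j, hi, hj, ?_, ?_, ?_⟩
  · rw [hi', hj']
    intro h; have := hp.1 _ _ (by omega) (by omega) h; omega
  · rw [hi', ← h0]; exact hp.2 0 (by omega)
  · rw [hj', ← h0]; exact hl.symm

lemma C32_of_cyc {V : Type*} {H : SimpleGraph V} {n m : ℕ} {p q : ℕ → V} (hp : Cyc H n p)
    (hq : Cyc H m q) (hd : ∀ i < n, ∀ j < m, p i ≠ q j) : IsMinor C32 H := by
  obtain ⟨h3, hp, hl⟩ := hp
  obtain ⟨h3', hq, hl'⟩ := hq
  have sub : ∀ (p : ℕ → V) (n i j : ℕ), j < n → seg p i j ⊆ seg p 0 (n - 1) := by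
    rintro p n i j hj a ⟨k, h1, h2, rfl⟩
    exact mem_seg p (by omega) (by omega)
  refine C32_of (A := seg p 0 0) (B := seg p 1 1) (C := seg p 2 (n - 1))
    (D := seg q 0 0) (E := seg q 1 1) (F := seg q 2 (m - 1))
    (seg_conn hp (by omega) (by omega)) (seg_conn hp (by omega) (by omega))
    (seg_conn hp (by omega) (by omega)) (seg_conn hq (by omega) (by omega))
    (seg_conn hq (by omega) (by omega)) (seg_conn hq (by omega) (by omega))
    (seg_disj hp (by omega) (by omega)) (seg_disj hp (by omega) (by omega))
    (seg_disj hp (by omega) (by omega)) (seg_disj hq (by omega) (by omega))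
    (seg_disj hq (by omega) (by omega)) (seg_disj hq (by omega) (by omega))
    (seg p 0 (n - 1)) (seg q 0 (m - 1))
    (disj_seg_seg fun a b _ _ _ _ => hd a (by omega) b (by omega))
    (sub _ _ _ _ (by omega)) (sub _ _ _ _ (by omega)) (sub _ _ _ _ (by omega))
    (sub _ _ _ _ (by omega)) (sub _ _ _ _ (by omega)) (sub _ _ _ _ (by omega)) ?_ ?_ ?_ ?_ ?_ ?_
  · exact ⟨p 0, mem_seg _ le_rfl le_rfl, p 1, mem_seg _ le_rfl le_rfl, hp.2 0 (by omega)⟩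
  · exact ⟨p 0, mem_seg _ le_rfl le_rfl, p (n - 1), mem_seg _ (by omega) le_rfl, hl.symm⟩
  · exact ⟨p 1, mem_seg _ le_rfl le_rfl, p 2, mem_seg _ (by omega) (by omega), hp.2 1 (by omega)⟩
  · exact ⟨q 0, mem_seg _ le_rfl le_rfl, q 1, mem_seg _ le_rfl le_rfl, hq.2 0 (by omega)⟩
  · exact ⟨q 0, mem_seg _ le_rfl le_rfl, q (m - 1), mem_seg _ (by omega) le_rfl, hl'.symm⟩
  · exact ⟨q 1, mem_seg _ le_rfl le_rfl, q 2, mem_seg _ (by omega) (by omega), hq.2 1 (by omega)⟩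

lemma K4_of_hub {V : Type*} {H : SimpleGraph V} {n : ℕ} {p : ℕ → V} (hp : Cyc H n p) {B : Set V}
    (hB : Conn H B) (hd : ∀ i < n, p i ∉ B) {i j k : ℕ} (hij : i < j) (hjk : j < k) (hk : k < n)
    (ai : ∃ b ∈ B, H.Adj b (p i)) (aj : ∃ b ∈ B, H.Adj b (p j)) (ak : ∃ b ∈ B, H.Adj b (p k)) :
    IsMinor K4 H := by
  obtain ⟨h3, hp, hl⟩ := hp
  have dB : ∀ i j, j < n → Disjoint B (seg p i j) := by
    intro i j hj
    rw [Set.disjoint_right]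
    rintro a ⟨k, h1, h2, rfl⟩
    exact hd k (by omega)
  obtain ⟨b1, hb1, ai⟩ := ai
  obtain ⟨b2, hb2, aj⟩ := aj
  obtain ⟨b3, hb3, ak⟩ := ak
  refine K4_of (A := B) (B := seg p 0 i) (C := seg p (i + 1) j) (D := seg p (j + 1) (n - 1))
    hB (seg_conn hp (by omega) (by omega)) (seg_conn hp (by omega) (by omega))
    (seg_conn hp (by omega) (by omega)) (dB _ _ (by omega)) (dB _ _ (by omega)) (dB _ _ (by omega))
    (seg_disj hp (by omega) (by omega)) (seg_disj hp (by omega) (by omega))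
    (seg_disj hp (by omega) (by omega)) ?_ ?_ ?_ ?_ ?_ ?_
  · exact ⟨b1, hb1, p i, mem_seg _ (by omega) (by omega), ai⟩
  · exact ⟨b2, hb2, p j, mem_seg _ (by omega) (by omega), aj⟩
  · exact ⟨b3, hb3, p k, mem_seg _ (by omega) (by omega), ak⟩
  · exact ⟨p i, mem_seg _ (by omega) (by omega), p (i + 1), mem_seg _ (by omega) (by omega), hp.2 _ (by omega)⟩
  · exact ⟨p 0, mem_seg _ (by omega) (by omega), p (n - 1), mem_seg _ (by omega) (by omega), hl.symm⟩
  · exact ⟨p j, mem_seg _ (by omega) (by omega), p (j + 1), mem_seg _ (by omega) (by omega), hp.2 _ (by omega)⟩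

lemma K4_of_hub' {V : Type*} {H : SimpleGraph V} {n : ℕ} {p : ℕ → V} (hp : Cyc H n p) {B : Set V}
    (hB : Conn H B) (hd : ∀ i < n, p i ∉ B) {i j k : ℕ} (hij : i ≠ j) (hjk : j ≠ k) (hik : i ≠ k)
    (hi : i < n) (hj : j < n) (hk : k < n)
    (ai : ∃ b ∈ B, H.Adj b (p i)) (aj : ∃ b ∈ B, H.Adj b (p j)) (ak : ∃ b ∈ B, H.Adj b (p k)) :
    IsMinor K4 H := by
  rcases lt_or_gt_of_ne hij with h1 | h1 <;> rcases lt_or_gt_of_ne hjk with h2 | h2 <;>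
    rcases lt_or_gt_of_ne hik with h3 | h3
  · exact K4_of_hub hp hB hd h1 h2 hk ai aj ak
  · omega
  · exact K4_of_hub hp hB hd h3 h2 hj ai ak aj
  · exact K4_of_hub hp hB hd h3 h1 hj ak ai aj
  · exact K4_of_hub hp hB hd h1 h3 hk aj ai ak
  · exact K4_of_hub hp hB hd h2 h3 hi aj ak ai
  · omega
  · exact K4_of_hub hp hB hd h2 h1 hi ak aj ai

/-! ### Minimum degree three forces a `K₄`, `K_{2,3}` or `C_{3,2}` minor -/

lemma mindeg3 {V : Type*} [Fintype V] [Nonempty V] {H : SimpleGraph V}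
    (hdeg : ∀ x y z : V, ∃ w, w ≠ y ∧ w ≠ z ∧ H.Adj x w)
    (h4 : ¬ IsMinor K4 H) (h23 : ¬ IsMinor K23 H) (hC : ¬ IsMinor C32 H) : False := by
  classical
  -- longest paths in an acyclic nonempty set
  have long : ∀ S : Set V, S.Nonempty → ¬ HasCyc H S → ∃ n p, PS H n p ∧ 1 ≤ n ∧
      (∀ i < n, p i ∈ S) ∧ (∀ u ∈ S, H.Adj (p (n - 1)) u → 2 ≤ n ∧ u = p (n - 2)) ∧
      (∀ u ∈ S, H.Adj (p 0) u → 2 ≤ n ∧ u = p 1) := by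
    rintro S ⟨a, ha⟩ hS
    obtain ⟨n, p, hp, ⟨hn, hpS⟩, hmax⟩ := exists_longest (H := H)
      (fun n p => 1 ≤ n ∧ ∀ i < n, p i ∈ S)
      ⟨1, fun _ => a, ⟨fun i j hi hj _ => by omega, fun i hi => by omega⟩, le_rfl, fun _ _ => ha⟩
    have ext : ∀ q, PS H n q → (∀ i < n, q i ∈ S) →
        ∀ u ∈ S, H.Adj (q (n - 1)) u → ∃ i < n, q i = u := by
      intro q hq hqS u hu hadj
      by_contra hcon
      push Not at hcon
      have := hmax _ _ (hq.snoc hn hcon hadj) ⟨by omega, fun i hi => by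
        try dsimp only
        split_ifs with h
        · exact hqS i h
        · exact hu⟩
      omega
    refine ⟨n, p, hp, hn, hpS, end_nbr hp hn hpS hS (ext p hp hpS), ?_⟩
    have hr : ∀ i < n, (fun i => p (n - 1 - i)) i ∈ S := fun i hi => hpS _ (by omega)
    have := end_nbr hp.rev hn hr hS (ext _ hp.rev hr)
    intro u hu hadj
    have h := this u hu (by simpa using hadj)
    refine ⟨h.1, ?_⟩
    rw [h.2]
    have h1 := h.1
    try dsimp only
    rw [show n - 1 - (n - 2) = 1 by omega]
  have hcyc : HasCyc H Set.univ := by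
    by_contra hcon
    obtain ⟨n, p, hp, hn, -, he, -⟩ := long _ Set.univ_nonempty hcon
    obtain ⟨w, h1, -, h3⟩ := hdeg (p (n - 1)) (p (n - 2)) (p (n - 2))
    exact h1 (he w trivial h3).2
  have hex : ∃ n, ∃ p, Cyc H n p := by
    obtain ⟨n, p, h, -⟩ := hcyc; exact ⟨n, p, h⟩
  obtain ⟨n, ⟨p, hp⟩, hmin⟩ : ∃ n, (∃ p, Cyc H n p) ∧ ∀ m, m < n → ¬ ∃ p, Cyc H m p :=
    ⟨Nat.find hex, Nat.find_spec hex, fun m hm => Nat.find_min hex hm⟩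
  have h3 := hp.1
  set W : Set V := {v | ∀ i < n, p i ≠ v} with hW
  have notW : ∀ v, v ∉ W → ∃ i < n, p i = v := by
    intro v hv
    by_contra hcon
    push Not at hcon
    exact hv hcon
  have hWc : ¬ HasCyc H W := by
    rintro ⟨m, q, hq, hqW⟩
    exact hC (C32_of_cyc hp hq (fun i hi j hj => hqW j hj i hi))
  by_cases hWn : W.Nonempty
  · obtain ⟨m, q, hq, hm, hqW, e1, e0⟩ := long W hWn hWc
    -- neighbours on the cycle
    have key : ∀ x y, (∀ u ∈ W, H.Adj x u → u = y) → ∃ i j, i < n ∧ j < n ∧ i ≠ j ∧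
        H.Adj x (p i) ∧ H.Adj x (p j) := by
      intro x y hxy
      obtain ⟨w1, a1, -, b1⟩ := hdeg x y y
      obtain ⟨i, hi, rfl⟩ := notW w1 (fun h => a1 (hxy _ h b1))
      obtain ⟨w2, a2, a3, b2⟩ := hdeg x y (p i)
      obtain ⟨j, hj, rfl⟩ := notW w2 (fun h => a2 (hxy _ h b2))
      exact ⟨i, j, hi, hj, by rintro rfl; exact a3 rfl, b1, b2⟩
    obtain ⟨i, j, hi, hj, hij, ai, aj⟩ := key (q (m - 1)) (q (m - 2)) (fun u hu h => (e1 u hu h).2)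
    have hub : ∀ i < n, p i ∉ seg q 0 (m - 1) := by
      rintro i hi ⟨k, -, hk, h⟩
      exact hqW k (by omega) i hi h.symm
    have chub : Conn H (seg q 0 (m - 1)) := seg_conn hq (by omega) (by omega)
    have m1 : q (m - 1) ∈ seg q 0 (m - 1) := mem_seg _ (by omega) (by omega)
    have m0 : q 0 ∈ seg q 0 (m - 1) := mem_seg _ (by omega) (by omega)
    by_cases hm2 : 2 ≤ m
    · obtain ⟨k, l, hk, hl, hkl, ak, al⟩ := key (q 0) (q 1) (fun u hu h => (e0 u hu h).2)
      have hk' : k = i ∨ k = j := by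
        by_contra hcon
        push Not at hcon
        exact h4 (K4_of_hub' hp chub hub hij hcon.2.symm hcon.1.symm hi hj hk
          ⟨_, m1, ai⟩ ⟨_, m1, aj⟩ ⟨_, m0, ak⟩)
      have hl' : l = i ∨ l = j := by
        by_contra hcon
        push Not at hcon
        exact h4 (K4_of_hub' hp chub hub hij hcon.2.symm hcon.1.symm hi hj hl
          ⟨_, m1, ai⟩ ⟨_, m1, aj⟩ ⟨_, m0, al⟩)
      have bi : H.Adj (q 0) (p i) := by
        rcases hk' with h | h
        · rwa [← h]
        · rcases hl' with h' | h'
          · rwa [← h']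
          · omega
      have bj : H.Adj (q 0) (p j) := by
        rcases hk' with h | h
        · rcases hl' with h' | h'
          · omega
          · rwa [← h']
        · rwa [← h]
      obtain ⟨p', hc', h0, hiff⟩ := hp.rotate hi
      obtain ⟨s, hs, hs'⟩ := (hiff (p j)).2 ⟨j, hj, rfl⟩
      have hp'W : ∀ t < n, ∀ k < m, p' t ≠ q k := by
        intro t ht k hk h
        obtain ⟨t', ht', h'⟩ := (hiff (p' t)).1 ⟨t, ht, rfl⟩
        exact hqW k hk t' ht' (h'.trans h)
      rw [← h0] at ai bi
      rw [← hs'] at aj bj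
      have hs0 : 0 < s := by
        rcases Nat.eq_zero_or_pos s with h | h
        · exfalso
          subst h
          rw [h0] at hs'
          exact hij (hp.2.1.1 _ _ hi hj hs')
        · exact h
      have q01 : q 0 ≠ q (m - 1) := fun h => by
        have := hq.1 _ _ (by omega) (by omega) h; omega
      obtain ⟨a, b, hab, hb, had, hs1, adj1, adj2⟩ : ∃ a b, a ≤ b ∧ b < n ∧ 0 < a ∧
          (b < s ∨ s < a) ∧ Adjs H {p' 0} (seg p' a b) ∧ Adjs H {p' s} (seg p' a b) := by
        have P := hc'.2.1
        by_cases h2 : 2 ≤ s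
        · refine ⟨1, s - 1, by omega, by omega, by omega, by omega, ?_, ?_⟩
          · exact ⟨_, rfl, p' 1, mem_seg _ (by omega) (by omega), P.2 0 (by omega)⟩
          · refine ⟨_, rfl, p' (s - 1), mem_seg _ (by omega) (by omega), ?_⟩
            have := P.2 (s - 1) (by omega)
            rw [show s - 1 + 1 = s by omega] at this
            exact this.symm
        · refine ⟨2, n - 1, by omega, by omega, by omega, by omega, ?_, ?_⟩
          · exact ⟨_, rfl, p' (n - 1), mem_seg _ (by omega) (by omega), hc'.2.2.symm⟩
          · have : s = 1 := by omega
            subst this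
            exact ⟨_, rfl, p' 2, mem_seg _ (by omega) (by omega), P.2 1 (by omega)⟩
      have P := hc'.2.1
      refine h23 (K23_of (A := {p' 0}) (B := {p' s}) (C := {q 0}) (D := {q (m - 1)})
        (E := seg p' a b) (conn_singleton _ _) (conn_singleton _ _) (conn_singleton _ _)
        (conn_singleton _ _) (seg_conn P hab hb) ?_ ?_ ?_ ?_ ?_ ?_ ?_ ?_ ?_ ?_
        ⟨_, rfl, _, rfl, bi.symm⟩ ⟨_, rfl, _, rfl, ai.symm⟩ adj1 ⟨_, rfl, _, rfl, bj.symm⟩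
        ⟨_, rfl, _, rfl, aj.symm⟩ adj2)
      · rw [Set.disjoint_singleton]
        intro h; have := P.1 _ _ (by omega) hs h; omega
      · rw [Set.disjoint_singleton]; exact hp'W _ (by omega) _ (by omega)
      · rw [Set.disjoint_singleton]; exact hp'W _ (by omega) _ (by omega)
      · refine disj_singleton_seg fun k h1 h2 h => ?_
        have := P.1 _ _ (by omega) (by omega) h; omega
      · rw [Set.disjoint_singleton]; exact hp'W _ (by omega) _ (by omega)
      · rw [Set.disjoint_singleton]; exact hp'W _ (by omega) _ (by omega)
      · refine disj_singleton_seg fun k h1 h2 h => ?_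
        have := P.1 _ _ (by omega) (by omega) h; omega
      · rw [Set.disjoint_singleton]; exact q01
      · exact disj_singleton_seg fun k h1 h2 => hp'W _ (by omega) _ (by omega)
      · exact disj_singleton_seg fun k h1 h2 => hp'W _ (by omega) _ (by omega)
    · obtain ⟨w, w1, w2, aw⟩ := hdeg (q (m - 1)) (p i) (p j)
      obtain ⟨k, hk, rfl⟩ := notW w (fun h => hm2 (e1 w h aw).1)
      exact h4 (K4_of_hub' hp chub hub hij (by rintro rfl; exact w2 rfl)
        (by rintro rfl; exact w1 rfl) hi hj hk ⟨_, m1, ai⟩ ⟨_, m1, aj⟩ ⟨_, m1, aw⟩)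
  · rw [Set.not_nonempty_iff_eq_empty] at hWn
    obtain ⟨w, w1, w2, aw⟩ := hdeg (p 0) (p 1) (p (n - 1))
    obtain ⟨i, hi, rfl⟩ := notW w (by rw [hWn]; exact fun h => h)
    have i0 : i ≠ 0 := by rintro rfl; exact aw.ne rfl
    have i1 : i ≠ 1 := by rintro rfl; exact w1 rfl
    have i2 : i ≠ n - 1 := by rintro rfl; exact w2 rfl
    exact hmin (i - 0 + 1) (by omega) ⟨_, hp.2.1.chord (i := 0) (j := i) (by omega) hi aw.symm⟩

/-! ### A degree two vertex in a triangle -/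

lemma tri_unique {V : Type*} {H : SimpleGraph V} {n m : ℕ} {p r : ℕ → V}
    (hp : Cyc H n p) (hr : Cyc H m r) (hyz : H.Adj (r 0) (p 0)) (h23 : ¬ IsMinor K23 H)
    {i s : ℕ} (hi : 1 < i) (him : i < m - 1) (hs0 : 0 < s) (hs : s < n) (his : r i = p s)
    (huniq : ∀ a < m, ∀ b < n, r a = p b → a = i) : False := by
  have P := hp.2.1
  have R := hr.2.1
  have inj : ∀ a < m, ∀ b < m, a ≠ b → r a ≠ r b := fun a ha b hb hne h => hne (R.1 _ _ ha hb h)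
  refine h23 (K23_of (A := {r 0}) (B := {r i}) (C := seg r 1 (i - 1)) (D := seg r (i + 1) (m - 1))
    (E := seg p 0 (s - 1)) (conn_singleton _ _) (conn_singleton _ _)
    (seg_conn R (by omega) (by omega)) (seg_conn R (by omega) (by omega))
    (seg_conn P (by omega) (by omega)) ?_ ?_ ?_ ?_ ?_ ?_ ?_ ?_ ?_ ?_ ?_ ?_ ?_ ?_ ?_ ?_)
  · rw [Set.disjoint_singleton]; exact inj _ (by omega) _ (by omega) (by omega)
  · exact disj_singleton_seg fun k _ _ => inj _ (by omega) _ (by omega) (by omega)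
  · exact disj_singleton_seg fun k _ _ => inj _ (by omega) _ (by omega) (by omega)
  · refine disj_singleton_seg fun k _ _ h => ?_
    have := huniq _ (by omega) _ (by omega) h.symm; omega
  · exact disj_singleton_seg fun k _ _ => inj _ (by omega) _ (by omega) (by omega)
  · exact disj_singleton_seg fun k _ _ => inj _ (by omega) _ (by omega) (by omega)
  · refine disj_singleton_seg fun k _ _ h => ?_
    rw [his] at h
    have := P.1 _ _ (by omega) (by omega) h; omega
  · exact seg_disj R (by omega) (by omega)
  · refine disj_seg_seg fun a b _ _ _ _ h => ?_
    have := huniq _ (by omega) _ (by omega) h; omega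
  · refine disj_seg_seg fun a b _ _ _ _ h => ?_
    have := huniq _ (by omega) _ (by omega) h; omega
  · exact ⟨_, rfl, r 1, mem_seg _ (by omega) (by omega), R.2 0 (by omega)⟩
  · exact ⟨_, rfl, r (m - 1), mem_seg _ (by omega) (by omega), hr.2.2.symm⟩
  · exact ⟨_, rfl, p 0, mem_seg _ (by omega) (by omega), hyz⟩
  · refine ⟨_, rfl, r (i - 1), mem_seg _ (by omega) (by omega), ?_⟩
    have := R.2 (i - 1) (by omega)
    rw [show i - 1 + 1 = i by omega] at this
    exact this.symm
  · exact ⟨_, rfl, r (i + 1), mem_seg _ (by omega) (by omega), R.2 i (by omega)⟩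
  · refine ⟨_, rfl, p (s - 1), mem_seg _ (by omega) (by omega), ?_⟩
    have := P.2 (s - 1) (by omega)
    rw [show s - 1 + 1 = s by omega] at this
    rw [his]
    exact this.symm

/-- two crossing attachments give `K_{2,3}` -/
lemma tri_cross {V : Type*} {H : SimpleGraph V} {n m : ℕ} {p r : ℕ → V} {x : V}
    (hp : Cyc H n p) (hr : Cyc H m r) (hxy : H.Adj x (r 0)) (hxz : H.Adj x (p 0))
    (hxp : ∀ i < n, p i ≠ x) (hxr : ∀ i < m, r i ≠ x)
    (hyp : ∀ i < n, p i ≠ r 0) (hzr : ∀ i < m, r i ≠ p 0)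
    {i j s t : ℕ} (hi : 1 ≤ i) (hij : i < j) (hj : j < m) (his : r i = p s) (hjt : r j = p t)
    (hs : s < n) (ht : t < n)
    (hlo : ∀ a < i, ∀ b < n, r a ≠ p b) (hhi : ∀ a, j < a → a < m → ∀ b < n, r a ≠ p b) :
    IsMinor K23 H := by
  have P := hp.2.1
  have R := hr.2.1
  have inj : ∀ a < m, ∀ b < m, a ≠ b → r a ≠ r b := fun a ha b hb hne h => hne (R.1 _ _ ha hb h)
  have injp : ∀ a < n, ∀ b < n, a ≠ b → p a ≠ p b := fun a ha b hb hne h => hne (P.1 _ _ ha hb h)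
  have h3 := hp.1
  have h3' := hr.1
  have hst : s ≠ t := by
    rintro rfl
    exact inj _ (by omega) _ hj (by omega) (his.trans hjt.symm)
  have hs0 : s ≠ 0 := by rintro rfl; exact hzr i (by omega) his
  have ht0 : t ≠ 0 := by rintro rfl; exact hzr j (by omega) hjt
  have lowR : Conn H (seg r 1 i) := seg_conn R (by omega) (by omega)
  have hiR : Conn H (seg r j (m - 1)) := seg_conn R (by omega) (by omega)
  -- the two halves of the path `p`
  obtain ⟨a, b, a', b', h1, h2, h3a, h3b, hb, hb', hab, hends⟩ : ∃ a b a' b', a ≤ s ∧ s ≤ b ∧ a' ≤ t ∧ t ≤ b' ∧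
      b < n ∧ b' < n ∧ (b < a' ∨ b' < a) ∧ ((a = 1 ∧ b' = n - 1) ∨ (a' = 1 ∧ b = n - 1)) := by
    rcases lt_or_gt_of_ne hst with h | h
    · exact ⟨1, s, s + 1, n - 1, by omega, by omega, by omega, by omega, by omega, by omega, by omega, by omega⟩
    · exact ⟨t + 1, n - 1, 1, t, by omega, by omega, by omega, by omega, by omega, by omega, by omega, by omega⟩
  have ha0 : 0 < a ∧ 0 < a' := by omega
  have dsegp : Disjoint (seg p a b) (seg p a' b') :=
    disj_seg_seg fun c d _ _ _ _ => injp _ (by omega) _ (by omega) (by omega)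
  have c1 : Conn H (seg r 1 i ∪ seg p a b) :=
    lowR.union_mem (seg_conn P (by omega) hb) (a := r i) (mem_seg _ hi le_rfl)
      (by rw [his]; exact mem_seg _ h1 h2)
  have c2 : Conn H (seg r j (m - 1) ∪ seg p a' b') :=
    hiR.union_mem (seg_conn P (by omega) hb') (a := r j) (mem_seg _ (by omega) (by omega))
      (by rw [hjt]; exact mem_seg _ h3a h3b)
  have d1 : Disjoint (seg r 1 i) (seg p a' b') := by
    refine disj_seg_seg fun c d _ hc _ _ h => ?_
    rcases hc.lt_or_eq with h' | h'
    · exact hlo c h' d (by omega) h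
    · subst h'
      rw [his] at h
      exact injp _ hs _ (by omega) (by omega) h
  have d2 : Disjoint (seg r j (m - 1)) (seg p a b) := by
    refine disj_seg_seg fun c d hc _ _ _ h => ?_
    rcases hc.lt_or_eq with h' | h'
    · exact hhi c h' (by omega) d (by omega) h
    · subst h'
      rw [hjt] at h
      exact injp _ ht _ (by omega) (by omega) h
  have zend : Adjs H {p 0} (seg r 1 i ∪ seg p a b) ∧ Adjs H {p 0} (seg r j (m - 1) ∪ seg p a' b') := by
    have f1 := P.2 0 (by omega)
    have f2 := hp.2.2.symm
    rcases hends with ⟨rfl, rfl⟩ | ⟨rfl, rfl⟩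
    · exact ⟨⟨_, rfl, p 1, Or.inr (mem_seg _ (by omega) (by omega)), f1⟩,
        ⟨_, rfl, p (n - 1), Or.inr (mem_seg _ (by omega) (by omega)), f2⟩⟩
    · exact ⟨⟨_, rfl, p (n - 1), Or.inr (mem_seg _ (by omega) (by omega)), f2⟩,
        ⟨_, rfl, p 1, Or.inr (mem_seg _ (by omega) (by omega)), f1⟩⟩
  refine K23_of (A := {r 0}) (B := {p 0}) (C := {x}) (D := seg r 1 i ∪ seg p a b)
    (E := seg r j (m - 1) ∪ seg p a' b') (conn_singleton _ _) (conn_singleton _ _)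
    (conn_singleton _ _) c1 c2 ?_ ?_ ?_ ?_ ?_ ?_ ?_ ?_ ?_ ?_ ?_ ?_ ?_ ?_ ?_ ?_
  · rw [Set.disjoint_singleton]; exact hzr 0 (by omega)
  · rw [Set.disjoint_singleton]; exact hxr 0 (by omega)
  · rw [Set.disjoint_union_right]
    exact ⟨disj_singleton_seg fun k _ _ => inj _ (by omega) _ (by omega) (by omega),
      disj_singleton_seg fun k _ _ => hyp _ (by omega)⟩
  · rw [Set.disjoint_union_right]
    exact ⟨disj_singleton_seg fun k _ _ => inj _ (by omega) _ (by omega) (by omega),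
      disj_singleton_seg fun k _ _ => hyp _ (by omega)⟩
  · rw [Set.disjoint_singleton]; exact hxp 0 (by omega)
  · rw [Set.disjoint_union_right]
    exact ⟨disj_singleton_seg fun k _ _ => hzr _ (by omega),
      disj_singleton_seg fun k _ _ => injp _ (by omega) _ (by omega) (by omega)⟩
  · rw [Set.disjoint_union_right]
    exact ⟨disj_singleton_seg fun k _ _ => hzr _ (by omega),
      disj_singleton_seg fun k _ _ => injp _ (by omega) _ (by omega) (by omega)⟩
  · rw [Set.disjoint_union_right]
    exact ⟨disj_singleton_seg fun k _ _ => hxr _ (by omega),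
      disj_singleton_seg fun k _ _ => hxp _ (by omega)⟩
  · rw [Set.disjoint_union_right]
    exact ⟨disj_singleton_seg fun k _ _ => hxr _ (by omega),
      disj_singleton_seg fun k _ _ => hxp _ (by omega)⟩
  · rw [Set.disjoint_union_right, Set.disjoint_union_left, Set.disjoint_union_left]
    exact ⟨⟨seg_disj R hij (by omega), d2.symm⟩, d1, dsegp⟩
  · exact ⟨_, rfl, _, rfl, hxy.symm⟩
  · exact ⟨_, rfl, r 1, Or.inl (mem_seg _ (by omega) (by omega)), R.2 0 (by omega)⟩
  · exact ⟨_, rfl, r (m - 1), Or.inl (mem_seg _ (by omega) (by omega)), hr.2.2.symm⟩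
  · exact ⟨_, rfl, _, rfl, hxz.symm⟩
  · exact zend.1
  · exact zend.2

/-- the `A` minor -/
lemma tri_A {V : Type*} {H : SimpleGraph V} {n m : ℕ} {p r : ℕ → V} {x : V}
    (hp : Cyc H n p) (hr : Cyc H m r) (hxy : H.Adj x (r 0)) (hxz : H.Adj x (p 0))
    (hyz : H.Adj (r 0) (p 0))
    (hxp : ∀ i < n, p i ≠ x) (hxr : ∀ i < m, r i ≠ x)
    (his : r 1 = p 1)
    (huniq : ∀ a < m, ∀ b < n, r a = p b → a = 1) : IsMinor graphA H := by
  have P := hp.2.1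
  have R := hr.2.1
  have inj : ∀ a < m, ∀ b < m, a ≠ b → r a ≠ r b := fun a ha b hb hne h => hne (R.1 _ _ ha hb h)
  have injp : ∀ a < n, ∀ b < n, a ≠ b → p a ≠ p b := fun a ha b hb hne h => hne (P.1 _ _ ha hb h)
  have h3 := hp.1
  have h3' := hr.1
  have hne : ∀ a < m, ∀ b < n, a ≠ 1 → r a ≠ p b := fun a ha b hb h1 h => h1 (huniq a ha b hb h)
  -- order: A = y, B = x, C = z, D = rest of p, E = w, F = rest of r
  refine A_of (A := {r 0}) (B := {x}) (C := {p 0}) (D := seg p 2 (n - 1)) (E := {r 1})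
    (F := seg r 2 (m - 1)) (conn_singleton _ _) (conn_singleton _ _) (conn_singleton _ _)
    (seg_conn P (by omega) (by omega)) (conn_singleton _ _) (seg_conn R (by omega) (by omega))
    ?_ ?_ ?_ ?_ ?_ ?_ ?_ ?_ ?_ ?_ ?_ ?_ ?_ ?_ ?_ ⟨_, rfl, _, rfl, hxy.symm⟩ ⟨_, rfl, _, rfl, hxz⟩
    ⟨_, rfl, p (n - 1), mem_seg _ (by omega) (by omega), hp.2.2.symm⟩
    ⟨p 2, mem_seg _ (by omega) (by omega), _, rfl, by rw [his]; exact (P.2 1 (by omega)).symm⟩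
    ⟨_, rfl, r 2, mem_seg _ (by omega) (by omega), R.2 1 (by omega)⟩
    ⟨r (m - 1), mem_seg _ (by omega) (by omega), _, rfl, hr.2.2⟩
    ⟨_, rfl, _, rfl, hyz⟩ ⟨_, rfl, _, rfl, by rw [his]; exact P.2 0 (by omega)⟩
    ⟨_, rfl, _, rfl, (R.2 0 (by omega)).symm⟩
  · rw [Set.disjoint_singleton]; exact hxr 0 (by omega)
  · rw [Set.disjoint_singleton]; exact hyz.ne
  · exact disj_singleton_seg fun k _ _ => (hne 0 (by omega) k (by omega) (by omega)).symm
  · rw [Set.disjoint_singleton]; exact inj _ (by omega) _ (by omega) (by omega)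
  · exact disj_singleton_seg fun k _ _ => inj _ (by omega) _ (by omega) (by omega)
  · rw [Set.disjoint_singleton]; exact (hxp 0 (by omega)).symm
  · exact disj_singleton_seg fun k _ _ => hxp _ (by omega)
  · rw [Set.disjoint_singleton]; exact (hxr 1 (by omega)).symm
  · exact disj_singleton_seg fun k _ _ => hxr _ (by omega)
  · exact disj_singleton_seg fun k _ _ => injp _ (by omega) _ (by omega) (by omega)
  · rw [Set.disjoint_singleton, his]; exact injp _ (by omega) _ (by omega) (by omega)
  · exact disj_singleton_seg fun k _ _ => hne _ (by omega) _ (by omega) (by omega)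
  · rw [his]
    exact (disj_singleton_seg fun k _ _ => injp _ (by omega) _ (by omega) (by omega)).symm
  · exact disj_seg_seg fun a b _ _ _ _ => (hne _ (by omega) _ (by omega) (by omega)).symm
  · exact disj_singleton_seg fun k _ _ => inj _ (by omega) _ (by omega) (by omega)

lemma tri_core {V : Type*} {H : SimpleGraph V} {n m : ℕ} {p r : ℕ → V} {x : V}
    (hp : Cyc H n p) (hr : Cyc H m r) (hxy : H.Adj x (r 0)) (hxz : H.Adj x (p 0))
    (hyz : H.Adj (r 0) (p 0))
    (hxp : ∀ i < n, p i ≠ x) (hxr : ∀ i < m, r i ≠ x)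
    (hyp : ∀ i < n, p i ≠ r 0) (hzr : ∀ i < m, r i ≠ p 0)
    (h23 : ¬ IsMinor K23 H) (hC : ¬ IsMinor C32 H) (hA : ¬ IsMinor graphA H) : False := by
  classical
  let Q : ℕ → Prop := fun i => i < m ∧ ∃ s < n, r i = p s
  have hex : ∃ i, Q i := by
    by_contra hcon
    apply hC
    refine C32_of_cyc hp hr fun i hi j hj h => hcon ⟨j, hj, i, hi, h.symm⟩
  have hf := Nat.find_spec hex
  have hf' := fun k => @Nat.find_min _ _ hex k
  set i := Nat.find hex
  have hg : Q (Nat.findGreatest Q m) := Nat.findGreatest_spec (P := Q) (le_of_lt hf.1) hf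
  have hg' : ∀ k, Q k → k ≤ Nat.findGreatest Q m := fun k hk => Nat.le_findGreatest (le_of_lt hk.1) hk
  set j := Nat.findGreatest Q m
  obtain ⟨him, s, hs, his⟩ := hf
  obtain ⟨hjm, t, ht, hjt⟩ := hg
  have hi0 : 1 ≤ i := by
    rcases Nat.eq_zero_or_pos i with h | h
    · rw [h] at his; exact absurd his.symm (hyp s hs)
    · exact h
  have hij : i ≤ j := hg' i ⟨him, s, hs, his⟩
  rcases hij.lt_or_eq with hij | hij
  · exact h23 (tri_cross hp hr hxy hxz hxp hxr hyp hzr hi0 hij hjm his hjt hs ht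
      (fun a ha b hb h => hf' a ha ⟨by omega, b, hb, h⟩)
      (fun a ha ha' b hb h => absurd (hg' a ⟨ha', b, hb, h⟩) (by omega)))
  · have hu : ∀ a < m, ∀ b < n, r a = p b → a = i := by
      intro a ha b hb h
      have h1 := hg' a ⟨ha, b, hb, h⟩
      have h2 : ¬ a < i := fun h' => hf' a h' ⟨ha, b, hb, h⟩
      omega
    have hu' : ∀ b < n, ∀ a < m, p b = r a → b = s := by
      intro b hb a ha h
      have := hu a ha b hb h.symm
      subst this
      exact hp.2.1.1 _ _ hb hs (h.trans his)
    have hs0 : 0 < s := by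
      rcases Nat.eq_zero_or_pos s with h | h
      · rw [h] at his; exact absurd his (hzr i him)
      · exact h
    have c1 : i = 1 ∨ i = m - 1 := by
      by_contra hcon
      exact tri_unique hp hr hyz h23 (i := i) (s := s) (by omega) (by omega) hs0 hs his hu
    have c2 : s = 1 ∨ s = n - 1 := by
      by_contra hcon
      exact tri_unique hr hp hyz.symm h23 (i := s) (s := i) (by omega) (by omega) hi0 him his.symm hu'
    -- reverse so that both are `1`
    have h3 := hp.1
    have h3' := hr.1
    obtain ⟨p', hp', e0, e1, hpp⟩ : ∃ p', Cyc H n p' ∧ p' 0 = p 0 ∧ p' 1 = p s ∧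
        ∀ k < n, ∃ l < n, p' k = p l := by
      rcases c2 with h | h
      · exact ⟨p, hp, rfl, by rw [h], fun k hk => ⟨k, hk, rfl⟩⟩
      · refine ⟨_, hp.rev, by simp, by simp [h], fun k hk => ?_⟩
        try dsimp only
        split_ifs
        · exact ⟨0, by omega, rfl⟩
        · exact ⟨n - k, by omega, rfl⟩
    obtain ⟨r', hr', f0, f1, hrr⟩ : ∃ r', Cyc H m r' ∧ r' 0 = r 0 ∧ r' 1 = r i ∧
        ∀ k < m, ∃ l < m, r' k = r l := by
      rcases c1 with h | h
      · exact ⟨r, hr, rfl, by rw [h], fun k hk => ⟨k, hk, rfl⟩⟩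
      · refine ⟨_, hr.rev, by simp, by simp [h], fun k hk => ?_⟩
        try dsimp only
        split_ifs
        · exact ⟨0, by omega, rfl⟩
        · exact ⟨m - k, by omega, rfl⟩
    refine hA (tri_A hp' hr' (x := x) (by rwa [f0]) (by rwa [e0]) (by rwa [f0, e0]) ?_ ?_
      (by rw [f1, e1, his]) ?_)
    · intro k hk
      obtain ⟨l, hl, h⟩ := hpp k hk
      rw [h]; exact hxp l hl
    · intro k hk
      obtain ⟨l, hl, h⟩ := hrr k hk
      rw [h]; exact hxr l hl
    · intro a ha b hb h
      obtain ⟨k, hk, hk'⟩ := hrr a ha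
      obtain ⟨l, hl, hl'⟩ := hpp b hb
      have := hu k hk l hl (by rw [← hk', ← hl', h])
      subst this
      exact hr'.2.1.1 _ _ ha (by omega) (hk'.trans f1.symm)

lemma tri {V : Type*} {H : SimpleGraph V} {x y z : V} (hxy : H.Adj x y) (hxz : H.Adj x z)
    (hyz : H.Adj y z) (hx : ∀ w, H.Adj x w → w = y ∨ w = z)
    (cy : HasCyc H {y}ᶜ) (cz : HasCyc H {z}ᶜ)
    (h23 : ¬ IsMinor K23 H) (hC : ¬ IsMinor C32 H) (hA : ¬ IsMinor graphA H) : False := by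
  have T : Cyc H 3 (fun i => if i = 0 then x else if i = 1 then y else z) := by
    refine ⟨le_rfl, ⟨?_, ?_⟩, ?_⟩
    · intro i j hi hj
      have := hxy.ne; have := hxz.ne; have := hyz.ne
      interval_cases i <;> interval_cases j <;> simp_all [eq_comm]
    · intro i hi
      have : i = 0 ∨ i = 1 := by omega
      rcases this with rfl | rfl <;> simpa
    · simpa using hxz.symm
  have gen : ∀ y z : V, (∀ w, H.Adj x w → w = y ∨ w = z) → (∀ i : ℕ, i < 3 →
        (if i = 0 then x else if i = 1 then y else z) = x ∨
        (if i = 0 then x else if i = 1 then y else z) = y ∨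
        (if i = 0 then x else if i = 1 then y else z) = z) → HasCyc H {y}ᶜ →
      (∀ n p, Cyc H n p → (∀ i < n, p i ≠ x ∧ p i ≠ y ∧ p i ≠ z) → False) →
      ∃ n p, Cyc H n p ∧ p 0 = z ∧ (∀ i < n, p i ≠ x) ∧ (∀ i < n, p i ≠ y) := by
    intro y z hx _ hc hno
    obtain ⟨n, p, hp, hpS⟩ := hc
    have hpy : ∀ i < n, p i ≠ y := fun i hi => hpS i hi
    have hpx : ∀ i < n, p i ≠ x := by
      rintro i hi rfl
      obtain ⟨a, b, ha, hb, hab, h1, h2⟩ := hp.two_nbrs hi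
      rcases hx _ h1 with h | h
      · exact hpy a ha h
      · rcases hx _ h2 with h' | h'
        · exact hpy b hb h'
        · exact hab (h.trans h'.symm)
    have : ∃ i < n, p i = z := by
      by_contra hcon
      push Not at hcon
      exact hno n p hp fun i hi => ⟨hpx i hi, hpy i hi, hcon i hi⟩
    obtain ⟨i, hi, hz⟩ := this
    obtain ⟨p', hp', h0, hiff⟩ := hp.rotate hi
    refine ⟨n, p', hp', h0.trans hz, fun k hk => ?_, fun k hk => ?_⟩
    · obtain ⟨l, hl, h⟩ := (hiff _).1 ⟨k, hk, rfl⟩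
      rw [← h]; exact hpx l hl
    · obtain ⟨l, hl, h⟩ := (hiff _).1 ⟨k, hk, rfl⟩
      rw [← h]; exact hpy l hl
  have hno : ∀ n p, Cyc H n p → (∀ i < n, p i ≠ x ∧ p i ≠ y ∧ p i ≠ z) → False := by
    intro n p hp h
    refine hC (C32_of_cyc hp T fun i hi j hj => ?_)
    have := h i hi
    try dsimp only
    split_ifs
    · exact this.1
    · exact this.2.1
    · exact this.2.2
  obtain ⟨n, p, hp, p0, px, py⟩ := gen y z hx (fun i _ => by split_ifs <;> simp) cy hno
  obtain ⟨m, r, hr, r0, rx, rz⟩ := gen z y (fun w h => (hx w h).symm)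
    (fun i _ => by split_ifs <;> simp) cz (fun n p hp h => hno n p hp fun i hi =>
      ⟨(h i hi).1, (h i hi).2.2, (h i hi).2.1⟩)
  subst p0 r0
  exact tri_core hp hr hxy hxz hyz px rx py rz h23 hC hA

/-! ### Suppressing a vertex of degree at most two; existence of an apex vertex -/

def Red {V : Type*} (H : SimpleGraph V) (x y z : V) : SimpleGraph ({x}ᶜ : Set V) where
  Adj a b := a ≠ b ∧ (H.Adj a b ∨ ((a : V) = y ∧ (b : V) = z) ∨ ((a : V) = z ∧ (b : V) = y))
  symm := ⟨fun a b h => ⟨h.1.symm, by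
    rcases h.2 with h | h | h
    · exact Or.inl h.symm
    · exact Or.inr (Or.inr ⟨h.2, h.1⟩)
    · exact Or.inr (Or.inl ⟨h.2, h.1⟩)⟩⟩
  loopless := ⟨fun a h => h.1 rfl⟩

lemma red_minor {V : Type*} {H : SimpleGraph V} {x y z : V}
    (h : y = z ∨ (H.Adj x y ∧ H.Adj x z)) : IsMinor (Red H x y z) H := by
  classical
  by_cases hyz : y = z
  · subst hyz
    refine ⟨fun a => {(a : V)}, fun a => ⟨_, rfl⟩, fun a => conn_singleton _ _, ?_, ?_⟩
    · intro a b hab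
      rw [Set.disjoint_singleton]
      exact fun h => hab (Subtype.ext h)
    · rintro a b ⟨hne, h | h | h⟩
      · exact ⟨_, rfl, _, rfl, h⟩
      · exact absurd (Subtype.ext (h.1.trans h.2.symm)) hne
      · exact absurd (Subtype.ext (h.1.trans h.2.symm)) hne
  · obtain ⟨hy, hz⟩ := h.resolve_left hyz
    set f : ({x}ᶜ : Set V) → Set V := fun a => if (a : V) = y then {y} ∪ {x} else {(a : V)} with hf
    have mf : ∀ a, (a : V) ∈ f a := by
      intro a; simp only [hf]; split_ifs with h
      · exact Or.inl h
      · rfl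
    have cf : ∀ a, Conn H (f a) := by
      intro a; simp only [hf]; split_ifs with h
      · exact (conn_singleton H y).union_adj (conn_singleton H x) rfl rfl hy.symm
      · exact conn_singleton _ _
    have ff : ∀ a b, b ∈ f a → b = a ∨ (b = x ∧ (a : V) = y) := by
      intro a b; simp only [hf]; split_ifs with h
      · rintro (h' | h')
        · exact Or.inl (h'.trans h.symm)
        · exact Or.inr ⟨h', h⟩
      · exact fun h => Or.inl h
    refine ⟨f, fun a => (cf a).nonempty, cf, ?_, ?_⟩
    · intro a b hab
      rw [Set.disjoint_left]
      intro c h1 h2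
      have a2 : (a : V) ≠ x := a.2
      have b2 : (b : V) ≠ x := b.2
      rcases ff _ _ h1 with h1 | h1 <;> rcases ff _ _ h2 with h2 | h2
      · exact hab (Subtype.ext (h1.symm.trans h2))
      · exact a2 (h1.symm.trans h2.1)
      · exact b2 (h2.symm.trans h1.1)
      · exact hab (Subtype.ext (h1.2.trans h2.2.symm))
    · rintro a b ⟨hne, h | h | h⟩
      · exact ⟨_, mf a, _, mf b, h⟩
      · refine ⟨x, ?_, _, mf b, by rw [h.2]; exact hz⟩
        simp [hf, h.1]
      · refine ⟨_, mf a, x, ?_, by rw [h.1]; exact hz.symm⟩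
        simp [hf, h.2]

lemma red_cyc {V : Type*} {H : SimpleGraph V} {x y z : V}
    (hx : ∀ w, H.Adj x w → w = y ∨ w = z) (h : ¬ H.Adj y z) (v : ({x}ᶜ : Set V))
    (hc : HasCyc H {(v : V)}ᶜ) : HasCyc (Red H x y z) {v}ᶜ := by
  classical
  -- lifting sequences
  have lift : ∀ n (p : ℕ → V), PS H n p → (∀ i < n, p i ≠ x) → (∀ i < n, p i ≠ v) →
      ∃ p' : ℕ → ({x}ᶜ : Set V), PS (Red H x y z) n p' ∧ (∀ i < n, p' i ∈ ({v}ᶜ : Set _)) ∧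
        ∀ i < n, (p' i : V) = p i := by
    intro n p hp hpx hpv
    have e : ∀ i < n, ((if hi : i < n then ⟨p i, hpx i hi⟩ else v : ({x}ᶜ : Set V)) : V) = p i := by
      intro i hi; rw [dif_pos hi]
    refine ⟨fun i => if hi : i < n then ⟨p i, hpx i hi⟩ else v, ⟨?_, ?_⟩, ?_, e⟩
    · intro i j hi hj hij
      have := congrArg Subtype.val hij
      dsimp only at this
      rw [e i hi, e j hj] at this
      exact hp.1 _ _ hi hj this
    · intro i hi
      have ha := hp.2 i hi
      refine ⟨fun hh => ?_, Or.inl ?_⟩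
      · have := congrArg Subtype.val hh
        rw [e i (by omega), e (i + 1) hi] at this
        exact ha.ne this
      · rw [e i (by omega), e (i + 1) hi]; exact ha
    · intro i hi hh
      have := congrArg Subtype.val hh
      dsimp only at this
      rw [e i hi] at this
      exact hpv i hi this
  obtain ⟨n, p, hp, hpv⟩ := hc
  by_cases hxp : ∃ i < n, p i = x
  · obtain ⟨i, hi, hix⟩ := hxp
    obtain ⟨q, hq, q0, hiff⟩ := hp.rotate hi
    have hqv : ∀ i < n, q i ≠ v := by
      intro k hk
      obtain ⟨l, hl, h⟩ := (hiff _).1 ⟨k, hk, rfl⟩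
      rw [← h]; exact hpv l hl
    obtain ⟨h3, Q, hl⟩ := hq
    have n1 : q 1 ≠ q (n - 1) := fun h => by have := Q.1 _ _ (by omega) (by omega) h; omega
    have a1 : H.Adj x (q 1) := by rw [← hix, ← q0]; exact Q.2 0 (by omega)
    have a2 : H.Adj x (q (n - 1)) := by rw [← hix, ← q0]; exact hl.symm
    have b : (q 1 = y ∧ q (n - 1) = z) ∨ (q 1 = z ∧ q (n - 1) = y) := by
      rcases hx _ a1 with h | h <;> rcases hx _ a2 with h' | h'
      · exact absurd (h.trans h'.symm) n1
      · exact Or.inl ⟨h, h'⟩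
      · exact Or.inr ⟨h, h'⟩
      · exact absurd (h.trans h'.symm) n1
    have n4 : 4 ≤ n := by
      by_contra hcon
      have : n = 3 := by omega
      subst this
      have := Q.2 1 (by omega)
      rcases b with b | b
      · rw [b.1] at this; simp only [show (1 + 1) = 3 - 1 by rfl] at this; rw [b.2] at this; exact h this
      · rw [b.1] at this; simp only [show (1 + 1) = 3 - 1 by rfl] at this; rw [b.2] at this; exact h this.symm
    obtain ⟨p', hp', hv', e⟩ := lift (n - 1) _ (Q.sub (i := 1) (m := n - 1) (by omega))
      (fun i hi h => by
        rw [← hix, ← q0] at h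
        have := Q.1 _ _ (by omega) (by omega) h
        omega) (fun i hi => hqv _ (by omega))
    refine ⟨n - 1, p', ⟨by omega, hp', ?_⟩, hv'⟩
    have e1 := e 0 (by omega)
    have e2 := e (n - 1 - 1) (by omega)
    try dsimp only at e1 e2
    rw [show 1 + 0 = 1 by rfl] at e1
    rw [show 1 + (n - 1 - 1) = n - 1 by omega] at e2
    refine ⟨fun hh => n1 ?_, ?_⟩
    · rw [← e1, ← e2, hh]
    · rw [e1, e2]
      right
      rcases b with b | b
      · exact Or.inr ⟨b.2, b.1⟩
      · exact Or.inl ⟨b.2, b.1⟩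
  · push Not at hxp
    obtain ⟨p', hp', hv', e⟩ := lift n p hp.2.1 hxp hpv
    have h3 := hp.1
    refine ⟨n, p', ⟨h3, hp', fun hh => ?_, Or.inl ?_⟩, hv'⟩
    · have := congrArg Subtype.val hh
      rw [e _ (by omega), e _ (by omega)] at this
      exact hp.2.2.ne this
    · rw [e _ (by omega), e _ (by omega)]; exact hp.2.2

lemma apex_aux : ∀ (N : ℕ) (V : Type) [Fintype V] [Nonempty V] (H : SimpleGraph V),
    Fintype.card V = N → ¬ IsMinor K4 H → ¬ IsMinor K23 H → ¬ IsMinor C32 H →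
    ¬ IsMinor graphA H → (∀ v, HasCyc H {v}ᶜ) → False := by
  intro N
  induction N using Nat.strong_induction_on with
  | _ N ih =>
  intro V _ _ H hN h4 h23 hC hA hall
  classical
  by_cases hdeg : ∀ x y z : V, ∃ w, w ≠ y ∧ w ≠ z ∧ H.Adj x w
  · exact mindeg3 hdeg h4 h23 hC
  · push Not at hdeg
    obtain ⟨x, y, z, hx⟩ := hdeg
    have hx' : ∀ w, H.Adj x w → w = y ∨ w = z := by
      intro w hw
      by_contra hcon
      push Not at hcon
      exact hx w hcon.1 hcon.2 hw
    have fin : ∀ y z, (∀ w, H.Adj x w → w = y ∨ w = z) → ¬ H.Adj y z →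
        (y = z ∨ (H.Adj x y ∧ H.Adj x z)) → False := by
      intro y z hx hyz hr
      have hm := red_minor hr
      have hne : Nonempty ({x}ᶜ : Set V) := by
        obtain ⟨n, p, hp, hpx⟩ := hall x
        exact ⟨⟨p 0, hpx 0 (by have := hp.1; omega)⟩⟩
      refine ih (Fintype.card ({x}ᶜ : Set V)) ?_ ({x}ᶜ : Set V) (Red H x y z) rfl
        (fun h => h4 (h.trans' hm)) (fun h => h23 (h.trans' hm)) (fun h => hC (h.trans' hm))
        (fun h => hA (h.trans' hm)) (fun v => red_cyc hx hyz v (hall v))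
      rw [← hN]
      exact Fintype.card_subtype_lt (x := x) (by simp)
    by_cases ay : H.Adj x y
    · by_cases az : H.Adj x z
      · by_cases hyz : H.Adj y z
        · exact tri ay az hyz hx' (hall y) (hall z) h23 hC hA
        · exact fin y z hx' hyz (Or.inr ⟨ay, az⟩)
      · exact fin y y (fun w hw => by
          rcases hx' w hw with h | h
          · exact Or.inl h
          · subst h; exact absurd hw az) (H.irrefl) (Or.inl rfl)
    · exact fin z z (fun w hw => by
          rcases hx' w hw with h | h
          · subst h; exact absurd hw ay
          · exact Or.inl h) (H.irrefl) (Or.inl rfl)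

/-! ### apex structure -/

lemma branch_exists {V : Type*} [Fintype V] {H : SimpleGraph V} {v t b : V}
    (hdeg : ∀ x y, ∃ w, w ≠ y ∧ H.Adj x w) (hc : ¬ HasCyc H {v}ᶜ) (ht : t ≠ v) (hb : b ≠ v)
    (htb : H.Adj t b) : ∃ n p, PS H n p ∧ 2 ≤ n ∧ p 0 = t ∧ p 1 = b ∧ (∀ i < n, p i ≠ v) ∧
      H.Adj (p (n - 1)) v := by
  obtain ⟨n, p, hp, ⟨hn, h0, h1, hv⟩, hmax⟩ := exists_longest (H := H)
    (fun n p => 2 ≤ n ∧ p 0 = t ∧ p 1 = b ∧ ∀ i < n, p i ≠ v)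
    ⟨2, fun i => if i = 0 then t else b, by
      refine ⟨⟨?_, ?_⟩, le_rfl, by simp, by simp, ?_⟩
      · intro i j hi hj hij
        have := htb.ne
        by_cases h1 : i = 0 <;> by_cases h2 : j = 0 <;> simp [h1, h2] at hij <;>
          first | omega | exact absurd hij this | exact absurd hij.symm this
      · intro i hi
        obtain rfl : i = 0 := by omega
        simpa using htb
      · intro i hi
        by_cases h1 : i = 0 <;> simp [h1, ht, hb]⟩
  refine ⟨n, p, hp, hn, h0, h1, hv, ?_⟩
  have key := end_nbr hp (by omega) (S := {v}ᶜ) (fun i hi => hv i hi) hc (by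
    intro u hu ha
    by_contra hcon
    push Not at hcon
    have := hmax _ _ (hp.snoc (by omega) hcon ha) ⟨by omega, by
      rw [if_pos (by omega)]; exact h0, by rw [if_pos (by omega)]; exact h1, by
      intro i hi
      try dsimp only
      split_ifs with h
      · exact hv i h
      · exact hu⟩
    omega)
  obtain ⟨w, hw, ha⟩ := hdeg (p (n - 1)) (p (n - 2))
  by_cases hwv : w = v
  · exact hwv ▸ ha
  · exact absurd (key w hwv ha).2 hw

lemma branch_disj {V : Type*} {H : SimpleGraph V} {S : Set V} {n m : ℕ} {p q : ℕ → V}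
    (hp : PS H n p) (hq : PS H m q) (h0 : p 0 = q 0) (h1 : p 1 ≠ q 1) (hpS : ∀ i < n, p i ∈ S)
    (hqS : ∀ i < m, q i ∈ S) (hc : ¬ HasCyc H S) :
    ∀ a b, 1 ≤ a → a < n → 1 ≤ b → b < m → p a ≠ q b := by
  intro i
  induction i using Nat.strong_induction_on with
  | _ i ih =>
  intro j hi hin hj hjm hij
  apply hc
  have h3 : 3 ≤ i + j := by
    by_contra hcon
    obtain rfl : i = 1 := by omega
    obtain rfl : j = 1 := by omega
    exact h1 hij
  have hne : ∀ k l, k ≤ i → 1 ≤ l → l < j → p k ≠ q l := by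
    intro k l hk hl hlj h
    rcases Nat.eq_zero_or_pos k with rfl | hk0
    · have := hq.1 0 l (by omega) (by omega) (h0 ▸ h)
      omega
    · rcases Nat.lt_or_ge k i with hki | hki
      · exact ih k hki l hk0 (by omega) hl (by omega) h
      · obtain rfl : k = i := by omega
        have := hq.1 j l (by omega) (by omega) (hij ▸ h)
        omega
  refine ⟨i + j, fun k => if k ≤ i then p k else q (i + j - k), ⟨h3, ⟨?_, ?_⟩, ?_⟩, ?_⟩
  · intro a b ha hb hab
    dsimp only at hab
    split_ifs at hab with x y y
    · exact hp.1 _ _ (by omega) (by omega) hab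
    · exact absurd hab (hne _ _ x (by omega) (by omega))
    · exact absurd hab.symm (hne _ _ y (by omega) (by omega))
    · have := hq.1 _ _ (by omega) (by omega) hab
      omega
  · intro a ha
    try dsimp only
    split_ifs with x y y
    · exact hp.2 a (by omega)
    · obtain rfl : a = i := by omega
      rw [hij]
      have := hq.2 (j - 1) (by omega)
      rw [show j - 1 + 1 = j by omega] at this
      rw [show a + j - (a + 1) = j - 1 by omega]
      exact this.symm
    · omega
    · have := hq.2 (i + j - (a + 1)) (by omega)
      rw [show i + j - (a + 1) + 1 = i + j - a by omega] at this
      exact this.symm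
  · have := (hq.2 0 (by omega)).symm
    beta_reduce
    rw [if_pos (Nat.zero_le _), h0]
    split_ifs with x
    · obtain rfl : j = 1 := by omega
      simpa [hij] using this
    · rw [show i + j - (i + j - 1) = 1 by omega]
      exact this
  · intro a ha
    try dsimp only
    split_ifs with x
    · exact hpS _ (by omega)
    · exact hqS _ (by omega)

lemma deg_bound {V : Type*} [Fintype V] {H : SimpleGraph V} {v t b c d : V}
    (hdeg : ∀ x y, ∃ w, w ≠ y ∧ H.Adj x w) (hc : ¬ HasCyc H {v}ᶜ) (h23 : ¬ IsMinor K23 H)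
    (ht : t ≠ v) (hb : b ≠ v) (hc' : c ≠ v) (hd : d ≠ v) (hbc : b ≠ c) (hbd : b ≠ d)
    (hcd : c ≠ d) (ab : H.Adj t b) (ac : H.Adj t c) (ad : H.Adj t d) : False := by
  obtain ⟨n, p, hp, hn, hp0, hp1, hpv, hpe⟩ := branch_exists hdeg hc ht hb ab
  obtain ⟨m, q, hq, hm, hq0, hq1, hqv, hqe⟩ := branch_exists hdeg hc ht hc' ac
  obtain ⟨l, r, hr, hl, hr0, hr1, hrv, hre⟩ := branch_exists hdeg hc ht hd ad
  have D1 := branch_disj hp hq (by rw [hp0, hq0]) (by rwa [hp1, hq1]) hpv hqv hc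
  have D2 := branch_disj hp hr (by rw [hp0, hr0]) (by rwa [hp1, hr1]) hpv hrv hc
  have D3 := branch_disj hq hr (by rw [hq0, hr0]) (by rwa [hq1, hr1]) hqv hrv hc
  have dt : ∀ (n : ℕ) (p : ℕ → V), PS H n p → 2 ≤ n → p 0 = t →
      Disjoint {t} (seg p 1 (n - 1)) := by
    intro n p hp hn h0
    refine disj_singleton_seg fun k h1 h2 h3 => ?_
    have := hp.1 k 0 (by omega) (by omega) (h3.trans h0.symm)
    omega
  have dv : ∀ (n : ℕ) (p : ℕ → V), 2 ≤ n → (∀ i < n, p i ≠ v) →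
      Disjoint {v} (seg p 1 (n - 1)) := by
    intro n p hn h
    exact disj_singleton_seg fun k h1 h2 => h k (by omega)
  refine h23 (K23_of (conn_singleton H t) (conn_singleton H v)
    (seg_conn hp (i := 1) (j := n - 1) (by omega) (by omega))
    (seg_conn hq (i := 1) (j := m - 1) (by omega) (by omega))
    (seg_conn hr (i := 1) (j := l - 1) (by omega) (by omega))
    (by simpa using ht) (dt _ _ hp hn hp0) (dt _ _ hq hm hq0) (dt _ _ hr hl hr0)
    (dv _ _ hn hpv) (dv _ _ hm hqv) (dv _ _ hl hrv)
    (disj_seg_seg fun a b h1 h2 h3 h4 => D1 a b h1 (by omega) h3 (by omega))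
    (disj_seg_seg fun a b h1 h2 h3 h4 => D2 a b h1 (by omega) h3 (by omega))
    (disj_seg_seg fun a b h1 h2 h3 h4 => D3 a b h1 (by omega) h3 (by omega))
    ⟨t, rfl, b, hp1 ▸ mem_seg p le_rfl (by omega), ab⟩
    ⟨t, rfl, c, hq1 ▸ mem_seg q le_rfl (by omega), ac⟩
    ⟨t, rfl, d, hr1 ▸ mem_seg r le_rfl (by omega), ad⟩
    ⟨v, rfl, _, mem_seg p (by omega) le_rfl, hpe.symm⟩
    ⟨v, rfl, _, mem_seg q (by omega) le_rfl, hqe.symm⟩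
    ⟨v, rfl, _, mem_seg r (by omega) le_rfl, hre.symm⟩)

lemma leaf_exists {V : Type*} [Fintype V] {H : SimpleGraph V} {S : Finset V} (hS : S.Nonempty)
    (hc : ¬ HasCyc H (S : Set V)) : ∃ x ∈ S, ∃ y, ∀ u ∈ S, H.Adj x u → u = y := by
  obtain ⟨a, ha⟩ := hS
  obtain ⟨n, p, hp, ⟨hn, hS⟩, hmax⟩ := exists_longest (H := H)
    (fun n p => 1 ≤ n ∧ ∀ i < n, p i ∈ S)
    ⟨1, fun _ => a, ⟨fun i j hi hj _ => by omega, fun i hi => by omega⟩, le_rfl, fun _ _ => ha⟩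
  refine ⟨p (n - 1), hS _ (by omega), p (n - 2), fun u hu ha => ?_⟩
  refine (end_nbr hp hn (S := (S : Set V)) (fun i hi => hS i hi) hc ?_ u hu ha).2
  intro u hu ha
  by_contra hcon
  push Not at hcon
  have := hmax _ _ (hp.snoc (by omega) hcon ha) ⟨by omega, by
      intro i hi
      try dsimp only
      split_ifs with h
      · exact hS i h
      · exact hu⟩
  omega

lemma linear_emb {V : Type*} [Fintype V] {H : SimpleGraph V} : ∀ (N : ℕ) (S : Finset V),
    S.card = N → ¬ HasCyc H (S : Set V) →
    (∀ t ∈ S, ∀ b ∈ S, ∀ c ∈ S, ∀ d ∈ S, b ≠ c → b ≠ d → c ≠ d → H.Adj t b → H.Adj t c →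
      H.Adj t d → False) →
    ∃ g : V → ℕ, (∀ a ∈ S, ∀ b ∈ S, g a = g b → a = b) ∧
      ∀ a ∈ S, ∀ b ∈ S, H.Adj a b → g a = g b + 1 ∨ g b = g a + 1 := by
  classical
  intro N
  induction N with
  | zero =>
    intro S hS _ _
    rw [Finset.card_eq_zero] at hS
    subst hS
    exact ⟨fun _ => 0, by simp, by simp⟩
  | succ N ih =>
    intro S hS hc hd
    obtain ⟨x, hx, y, hy⟩ := leaf_exists (H := H) (S := S) (Finset.card_pos.1 (by omega)) hc
    have hsub : ∀ a ∈ S.erase x, a ∈ S := fun a ha => Finset.mem_of_mem_erase ha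
    obtain ⟨g, hg1, hg2⟩ := ih (S.erase x) (by rw [Finset.card_erase_of_mem hx]; omega)
      (fun ⟨n, p, h1, h2⟩ => hc ⟨n, p, h1, fun i hi => hsub _ (h2 i hi)⟩)
      (fun t ht b hb c hc d hd' => hd t (hsub t ht) b (hsub b hb) c (hsub c hc) d (hsub d hd'))
    -- gluing
    have glue : ∀ g' : V → ℕ, (∀ a ∈ S.erase x, ∀ b ∈ S.erase x, g' a = g' b → a = b) →
        (∀ a ∈ S.erase x, ∀ b ∈ S.erase x, H.Adj a b → g' a = g' b + 1 ∨ g' b = g' a + 1) →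
        (∀ a ∈ S.erase x, g' a ≠ g' x) →
        (∀ a ∈ S.erase x, H.Adj x a → g' a = g' x + 1 ∨ g' x = g' a + 1) →
        ∃ g : V → ℕ, (∀ a ∈ S, ∀ b ∈ S, g a = g b → a = b) ∧
          ∀ a ∈ S, ∀ b ∈ S, H.Adj a b → g a = g b + 1 ∨ g b = g a + 1 := by
      intro g' k1 k2 k3 k4
      refine ⟨g', fun a ha b hb hab => ?_, fun a ha b hb hab => ?_⟩
      · by_cases h1 : a = x <;> by_cases h2 : b = x
        · rw [h1, h2]
        · subst h1; exact absurd hab.symm (k3 b (Finset.mem_erase.2 ⟨h2, hb⟩))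
        · subst h2; exact absurd hab (k3 a (Finset.mem_erase.2 ⟨h1, ha⟩))
        · exact k1 a (Finset.mem_erase.2 ⟨h1, ha⟩) b (Finset.mem_erase.2 ⟨h2, hb⟩) hab
      · by_cases h1 : a = x <;> by_cases h2 : b = x
        · rw [h1, h2] at hab; exact absurd hab H.irrefl
        · subst h1; exact (k4 b (Finset.mem_erase.2 ⟨h2, hb⟩) hab).symm
        · subst h2; exact (k4 a (Finset.mem_erase.2 ⟨h1, ha⟩) hab.symm)
        · exact k2 a (Finset.mem_erase.2 ⟨h1, ha⟩) b (Finset.mem_erase.2 ⟨h2, hb⟩) hab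
    by_cases hxy : y ∈ S ∧ H.Adj x y
    · obtain ⟨hyS, hxy⟩ := hxy
      have hyx : y ≠ x := hxy.ne'
      have hyE : y ∈ S.erase x := Finset.mem_erase.2 ⟨hyx, hyS⟩
      by_cases hup : ∃ b ∈ S.erase x, H.Adj y b ∧ g b = g y + 1
      · obtain ⟨b, hb, hyb, hgb⟩ := hup
        have hlow : ∀ c ∈ S.erase x, H.Adj y c → c = b := by
          intro c hc hyc
          by_contra hcb
          exact hd y hyS x hx b (hsub b hb) c (hsub c hc) (Finset.ne_of_mem_erase hb).symm
            (Finset.ne_of_mem_erase hc).symm (Ne.symm hcb) hxy.symm hyb hyc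
        refine glue (fun a => if a = x then g y else if g y ≤ g a then g a + 1 else g a) ?_ ?_ ?_ ?_
        · intro a ha c hc hac
          simp only [Finset.ne_of_mem_erase ha, Finset.ne_of_mem_erase hc, if_false] at hac
          apply hg1 a ha c hc
          split_ifs at hac <;> omega
        · intro a ha c hc hac
          simp only [Finset.ne_of_mem_erase ha, Finset.ne_of_mem_erase hc, if_false]
          have h1 := hg2 a ha c hc hac
          have h2 : g a = g y → g c = g y + 1 := by
            intro h
            have := hg1 a ha y hyE h
            subst this
            rw [hlow c hc hac]; exact hgb
          have h3 : g c = g y → g a = g y + 1 := by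
            intro h
            have := hg1 c hc y hyE h
            subst this
            rw [hlow a ha hac.symm]; exact hgb
          split_ifs <;> omega
        · intro a ha
          simp only [Finset.ne_of_mem_erase ha, if_false, if_true]
          split_ifs <;> omega
        · intro a ha hxa
          have := hy a (hsub a ha) hxa
          subst this
          simp [hyx]
      · push Not at hup
        refine glue (fun a => if a = x then g y + 1 else if g y < g a then g a + 1 else g a) ?_ ?_ ?_ ?_
        · intro a ha c hc hac
          simp only [Finset.ne_of_mem_erase ha, Finset.ne_of_mem_erase hc, if_false] at hac
          apply hg1 a ha c hc
          split_ifs at hac <;> omega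
        · intro a ha c hc hac
          simp only [Finset.ne_of_mem_erase ha, Finset.ne_of_mem_erase hc, if_false]
          have h1 := hg2 a ha c hc hac
          have h2 : g a = g y → g c ≠ g y + 1 := by
            intro h
            have := hg1 a ha y hyE h
            subst this
            exact hup c hc hac
          have h3 : g c = g y → g a ≠ g y + 1 := by
            intro h
            have := hg1 c hc y hyE h
            subst this
            exact hup a ha hac.symm
          split_ifs <;> omega
        · intro a ha
          simp only [Finset.ne_of_mem_erase ha, if_false, if_true]
          split_ifs <;> omega
        · intro a ha hxa
          have := hy a (hsub a ha) hxa
          subst this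
          simp [hyx]
    · refine glue (fun a => if a = x then (∑ b, g b) + 1 else g a) ?_ ?_ ?_ ?_
      · intro a ha c hc hac
        simp only [Finset.ne_of_mem_erase ha, Finset.ne_of_mem_erase hc, if_false] at hac
        exact hg1 a ha c hc hac
      · intro a ha c hc hac
        simp only [Finset.ne_of_mem_erase ha, Finset.ne_of_mem_erase hc, if_false]
        exact hg2 a ha c hc hac
      · intro a ha
        simp only [Finset.ne_of_mem_erase ha, if_false, if_true]
        have := Finset.single_le_sum (f := g) (fun _ _ => Nat.zero_le _) (Finset.mem_univ a)
        omega
      · intro a ha hxa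
        have := hy a (hsub a ha) hxa
        subst this
        exact absurd ⟨hsub _ ha, hxa⟩ hxy

/-! ### embeddings in the two families -/

lemma P_adj {k : ℕ} (b : Bool) (σ : List Bool) (h1 : σ.length ≤ k) (h2 : (b :: σ).length ≤ k) :
    (Pgraph k).Adj (some ⟨σ, h1⟩) (some ⟨b :: σ, h2⟩) := by
  rw [Pgraph, SimpleGraph.fromEdgeSet_adj]
  refine ⟨Or.inl ⟨b, σ, by simpa using h2, rfl⟩, ?_⟩
  intro h
  have := congrArg (fun z : Option (CTVert k) => (z.map fun x => x.1.length)) h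
  simp at this

lemma P_leaf {k : ℕ} (l : CTVert k) (h : l.1.length = k) : (Pgraph k).Adj none (some l) := by
  rw [Pgraph, SimpleGraph.fromEdgeSet_adj]
  exact ⟨Or.inr ⟨l, h, rfl⟩, by simp⟩

lemma P_inv {k : ℕ} {u w : Option (CTVert k)} (h : (Pgraph k).Adj u w)
    (R : Option (CTVert k) → Option (CTVert k) → Prop) (hR : ∀ a b, R a b → R b a)
    (r1 : ∀ (b : Bool) (σ : List Bool) (h1 : σ.length ≤ k) (h2 : (b :: σ).length ≤ k),
      R (some ⟨σ, h1⟩) (some ⟨b :: σ, h2⟩))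
    (r2 : ∀ l : CTVert k, l.1.length = k → R none (some l)) : R u w := by
  rw [Pgraph, SimpleGraph.fromEdgeSet_adj] at h
  obtain ⟨⟨b, σ, hσ, h⟩ | ⟨l, hl, h⟩, -⟩ := h
  · rw [Sym2.eq_iff] at h
    obtain ⟨rfl, rfl⟩ | ⟨rfl, rfl⟩ := h
    · exact r1 b σ _ _
    · exact hR _ _ (r1 b σ _ _)
  · rw [Sym2.eq_iff] at h
    obtain ⟨rfl, rfl⟩ | ⟨rfl, rfl⟩ := h
    · exact r2 l hl
    · exact hR _ _ (r2 l hl)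

lemma qbase_ne (k : ℕ) : ∀ (σ τ : List Bool) (ht : τ.length < k), σ.length ≤ τ.length →
    Sum.inr ⟨τ, ht⟩ ≠ (qbase k σ).1 ∧ Sum.inr ⟨τ, ht⟩ ≠ (qbase k σ).2 := by
  intro σ
  induction σ with
  | nil => intro τ ht _; simp [qbase]
  | cons b σ ih =>
    intro τ ht hl
    simp only [List.length_cons] at hl
    have := ih τ ht (by omega)
    constructor
    · rw [qbase]
      dsimp only
      split_ifs
      · exact this.2
      · exact this.1
    · rw [qbase]
      dsimp only
      rw [dif_pos (show σ.length < k by omega)]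
      intro h
      have h2 := congrArg Subtype.val (Sum.inr.inj h)
      simp only at h2
      rw [h2] at hl
      omega

lemma Q_adj1 {k : ℕ} (σ : List Bool) (h : σ.length < k) :
    (Qgraph k).Adj (Sum.inr ⟨σ, h⟩) (qbase k σ).1 := by
  rw [Qgraph, SimpleGraph.fromEdgeSet_adj]
  exact ⟨Or.inr ⟨σ, h, Or.inl rfl⟩, (qbase_ne k σ σ h le_rfl).1⟩

lemma Q_adj2 {k : ℕ} (σ : List Bool) (h : σ.length < k) :
    (Qgraph k).Adj (Sum.inr ⟨σ, h⟩) (qbase k σ).2 := by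
  rw [Qgraph, SimpleGraph.fromEdgeSet_adj]
  exact ⟨Or.inr ⟨σ, h, Or.inr rfl⟩, (qbase_ne k σ σ h le_rfl).2⟩

lemma Q_base {k : ℕ} : (Qgraph k).Adj (Sum.inl false) (Sum.inl true) := by
  rw [Qgraph, SimpleGraph.fromEdgeSet_adj]
  exact ⟨Or.inl rfl, by simp⟩

lemma Q_inv {k : ℕ} {u w : QVert k} (h : (Qgraph k).Adj u w)
    (R : QVert k → QVert k → Prop) (hR : ∀ a b, R a b → R b a)
    (r0 : R (Sum.inl false) (Sum.inl true))
    (r1 : ∀ (σ : List Bool) (h : σ.length < k), R (Sum.inr ⟨σ, h⟩) (qbase k σ).1)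
    (r2 : ∀ (σ : List Bool) (h : σ.length < k), R (Sum.inr ⟨σ, h⟩) (qbase k σ).2) : R u w := by
  rw [Qgraph, SimpleGraph.fromEdgeSet_adj] at h
  obtain ⟨h | ⟨σ, hσ, h | h⟩, -⟩ := h
  · rw [Set.mem_singleton_iff, Sym2.eq_iff] at h
    obtain ⟨rfl, rfl⟩ | ⟨rfl, rfl⟩ := h
    · exact r0
    · exact hR _ _ r0
  · rw [Sym2.eq_iff] at h
    obtain ⟨rfl, rfl⟩ | ⟨rfl, rfl⟩ := h
    · exact r1 σ hσ
    · exact hR _ _ (r1 σ hσ)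
  · rw [Sym2.eq_iff] at h
    obtain ⟨rfl, rfl⟩ | ⟨rfl, rfl⟩ := h
    · exact r2 σ hσ
    · exact hR _ _ (r2 σ hσ)

lemma qbase_pre (k : ℕ) (τ : List Bool) (j : ℕ) :
    (qbase k (List.replicate j false ++ τ)).1 = (qbase k τ).1 := by
  induction j with
  | zero => simp
  | succ j ih =>
    rw [List.replicate_succ, List.cons_append, qbase]
    simpa using ih

lemma qbase_cons2 {k : ℕ} (b : Bool) (σ : List Bool) (h : σ.length < k) :
    (qbase k (b :: σ)).2 = Sum.inr ⟨σ, h⟩ := by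
  rw [qbase]
  simp [h]

def hat : List Bool → List Bool
  | [] => []
  | b :: σ => b :: false :: hat σ

lemma hat_length (σ : List Bool) : (hat σ).length = 2 * σ.length := by
  induction σ with
  | nil => rfl
  | cons b σ ih => simp only [hat, List.length_cons, ih]; omega

lemma hat_inj : ∀ (σ τ : List Bool), hat σ = hat τ → σ = τ := by
  intro σ
  induction σ with
  | nil =>
    intro τ h
    cases τ with
    | nil => rfl
    | cons b τ => simp [hat] at h
  | cons a σ ih =>
    intro τ h
    cases τ with
    | nil => simp [hat] at h
    | cons b τ =>
      simp only [hat, List.cons.injEq, true_and] at h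
      rw [h.1, ih τ h.2]

lemma hat_ne (b : Bool) (σ τ : List Bool) : hat σ ≠ b :: hat τ := by
  intro h
  have := congrArg List.length h
  simp only [hat_length, List.length_cons] at this
  omega

def phiP (k : ℕ) : Option (CTVert k) → Set (Option (CTVert (2 * k + 1)))
  | none => {none}
  | some σ => {z | ∃ x, z = some x ∧ (x.1 = hat σ.1 ∨ x.1 = false :: hat σ.1)}

lemma phiP_model (k : ℕ) : IsMinorModel (Pgraph k) (Pgraph (2 * k + 1)) (phiP k) := by
  have l1 : ∀ σ : List Bool, σ.length ≤ k → (hat σ).length ≤ 2 * k + 1 := fun σ h => by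
    rw [hat_length]; omega
  have l2 : ∀ (b : Bool) (σ : List Bool), σ.length ≤ k → (b :: hat σ).length ≤ 2 * k + 1 :=
    fun b σ h => by rw [List.length_cons, hat_length]; omega
  have c : ∀ u, Conn (Pgraph (2 * k + 1)) (phiP k u) := by
    rintro (_ | ⟨σ, hσ⟩)
    · exact conn_singleton _ _
    · refine conn_of_root (some ⟨hat σ, l1 σ hσ⟩) ⟨_, rfl, Or.inl rfl⟩ ?_
      rintro z ⟨⟨x, hx⟩, rfl, h | h⟩
      · simp only at h
        subst h
        exact .refl
      · simp only at h
        subst h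
        exact .single ⟨P_adj _ _ _ _, ⟨_, rfl, Or.inl rfl⟩, ⟨_, rfl, Or.inr rfl⟩⟩
  refine ⟨fun u => (c u).nonempty, c, ?_, ?_⟩
  · rintro (_ | ⟨σ, hσ⟩) (_ | ⟨τ, hτ⟩) hne
    · exact absurd rfl hne
    · rw [Set.disjoint_left]
      rintro z hz ⟨x, rfl, -⟩
      simp [phiP] at hz
    · rw [Set.disjoint_right]
      rintro z hz ⟨x, rfl, -⟩
      simp [phiP] at hz
    · rw [Set.disjoint_left]
      rintro z ⟨x, rfl, hx⟩ ⟨y, hxy, hy⟩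
      obtain rfl := Option.some.inj hxy
      have : σ ≠ τ := fun h => hne (by subst h; rfl)
      simp only at hx hy
      rcases hx with hx | hx <;> rcases hy with hy | hy <;> rw [hx] at hy
      · exact this (hat_inj _ _ hy)
      · exact hat_ne _ _ _ hy
      · exact hat_ne _ _ _ hy.symm
      · exact this (hat_inj _ _ (List.cons.inj hy).2)
  · intro u w huw
    refine P_inv huw (fun u w => ∃ a ∈ phiP k u, ∃ b ∈ phiP k w, (Pgraph (2 * k + 1)).Adj a b)
      ?_ ?_ ?_
    · rintro a b ⟨x, hx, y, hy, h⟩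
      exact ⟨y, hy, x, hx, h.symm⟩
    · intro b σ h1 h2
      refine ⟨some ⟨false :: hat σ, l2 _ _ h1⟩, ⟨_, rfl, Or.inr rfl⟩,
        some ⟨hat (b :: σ), l1 _ h2⟩, ⟨_, rfl, Or.inl rfl⟩, P_adj b _ _ _⟩
    · rintro ⟨l, hl⟩ hl'
      refine ⟨none, rfl, some ⟨false :: hat l, l2 _ _ hl⟩, ⟨_, rfl, Or.inr rfl⟩, P_leaf _ ?_⟩
      simp only at hl'
      simp [hat_length, hl']

lemma phiP_spare (k : ℕ) (u : Option (CTVert k)) :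
    ∃ s, (∀ u', s ∉ phiP k u') ∧ ∃ a ∈ phiP k u, (Pgraph (2 * k + 1)).Adj s a := by
  have l1 : ∀ σ : List Bool, σ.length ≤ k → (hat σ).length ≤ 2 * k + 1 := fun σ h => by
    rw [hat_length]; omega
  have l2 : ∀ (b : Bool) (σ : List Bool), σ.length ≤ k → (b :: hat σ).length ≤ 2 * k + 1 :=
    fun b σ h => by rw [List.length_cons, hat_length]; omega
  have key : ∀ (σ : List Bool) (h : (true :: hat σ).length ≤ 2 * k + 1) (u' : Option (CTVert k)),
      some ⟨true :: hat σ, h⟩ ∉ phiP k u' := by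
    rintro σ h (_ | ⟨τ, hτ⟩) hm
    · simp [phiP] at hm
    · obtain ⟨x, hx, h1⟩ := hm
      obtain rfl := Option.some.inj hx
      rcases h1 with h1 | h1
      · exact hat_ne _ _ _ h1.symm
      · simp at h1
  rcases u with _ | ⟨σ, hσ⟩
  · refine ⟨some ⟨true :: hat (List.replicate k false), l2 _ _ (by simp)⟩, key _ _, none, rfl,
      (P_leaf _ ?_).symm⟩
    simp [hat_length]
  · exact ⟨some ⟨true :: hat σ, l2 _ _ hσ⟩, key _ _, some ⟨hat σ, l1 _ hσ⟩, ⟨_, rfl, Or.inl rfl⟩,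
      (P_adj _ _ _ _).symm⟩

def iotaQ (k k' : ℕ) (hk : k ≤ k') : QVert k → QVert k'
  | Sum.inl b => Sum.inl b
  | Sum.inr x => Sum.inr ⟨x.1, lt_of_lt_of_le x.2 hk⟩

lemma iotaQ_inj (k k' : ℕ) (hk : k ≤ k') : Function.Injective (iotaQ k k' hk) := by
  rintro (a | ⟨a, ha⟩) (b | ⟨b, hb⟩) h <;> simp [iotaQ] at h <;> simp [h]

lemma iotaQ_qbase (k k' : ℕ) (hk : k ≤ k') : ∀ σ : List Bool, σ.length ≤ k →
    iotaQ k k' hk (qbase k σ).1 = (qbase k' σ).1 ∧ iotaQ k k' hk (qbase k σ).2 = (qbase k' σ).2 := by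
  intro σ
  induction σ with
  | nil => intro _; exact ⟨rfl, rfl⟩
  | cons b σ ih =>
    intro h
    simp only [List.length_cons] at h
    have := ih (by omega)
    constructor
    · cases b
      · simpa [qbase] using this.1
      · simpa [qbase] using this.2
    · rw [qbase_cons2 b σ (by omega), qbase_cons2 b σ (by omega)]
      rfl

lemma phiQ_model (k k' : ℕ) (hk : k ≤ k') :
    IsMinorModel (Qgraph k) (Qgraph k') (fun u => {iotaQ k k' hk u}) := by
  refine ⟨fun u => ⟨_, rfl⟩, fun u => conn_singleton _ _, ?_, ?_⟩
  · intro u w h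
    simpa using fun h' => h (iotaQ_inj k k' hk h')
  · intro u w huw
    refine ⟨_, rfl, _, rfl, ?_⟩
    refine Q_inv huw (fun u w => (Qgraph k').Adj (iotaQ k k' hk u) (iotaQ k k' hk w))
      (fun _ _ h => h.symm) Q_base ?_ ?_
    · intro σ h
      rw [(iotaQ_qbase k k' hk σ h.le).1]
      exact Q_adj1 σ _
    · intro σ h
      rw [(iotaQ_qbase k k' hk σ h.le).2]
      exact Q_adj2 σ _

lemma phiQ_spare (k : ℕ) (hk0 : 0 < k) (hk : k ≤ 2 * k + 1) (u : QVert k) :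
    ∃ s, (∀ u', s ∉ ({iotaQ k _ hk u'} : Set (QVert (2 * k + 1)))) ∧
      ∃ a ∈ ({iotaQ k _ hk u} : Set _), (Qgraph (2 * k + 1)).Adj s a := by
  have key : ∀ (τ : List Bool) (h : τ.length < 2 * k + 1), k ≤ τ.length →
      (qbase (2 * k + 1) τ).1 = iotaQ k _ hk u →
      ∃ s, (∀ u', s ∉ ({iotaQ k _ hk u'} : Set (QVert (2 * k + 1)))) ∧
      ∃ a ∈ ({iotaQ k _ hk u} : Set _), (Qgraph (2 * k + 1)).Adj s a := by
    intro τ h h1 h2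
    refine ⟨Sum.inr ⟨τ, h⟩, ?_, _, rfl, h2 ▸ Q_adj1 τ h⟩
    rintro (b | ⟨σ, hσ⟩) hm
    · simp [iotaQ] at hm
    · simp only [iotaQ, Set.mem_singleton_iff, Sum.inr.injEq, Subtype.mk.injEq] at hm
      rw [hm] at h1
      omega
  rcases u with (_ | _) | ⟨σ, hσ⟩
  · refine key (List.replicate k false ++ []) (by simp; omega) (by simp) ?_
    rw [qbase_pre]
    rfl
  · refine key (List.replicate k false ++ [true]) (by simp; omega) (by simp) ?_
    rw [qbase_pre]
    rfl
  · refine key (List.replicate (k - 1 - σ.length) false ++ true :: false :: σ) (by simp; omega)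
      (by simp; omega) ?_
    rw [qbase_pre]
    have := qbase_cons2 (k := 2 * k + 1) false σ (by omega)
    rw [qbase]
    simpa [iotaQ] using this

lemma fan_P {V : Type*} {H : SimpleGraph V} {v : V} (g : V → ℕ) (N : ℕ) (hN : ∀ w, g w ≤ N)
    (hg1 : ∀ a b, a ≠ v → b ≠ v → g a = g b → a = b)
    (hg2 : ∀ a b, a ≠ v → b ≠ v → H.Adj a b → g a = g b + 1 ∨ g b = g a + 1) :
    IsMinor H (Pgraph (N + 1)) := by
  classical
  let F : V → Set (Option (CTVert (N + 1))) := fun w =>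
    {z | ∃ x, z = some x ∧ ∃ j, x.1 = List.replicate j true ++ List.replicate (g w) false}
  let f : V → Set (Option (CTVert (N + 1))) := fun w => if w = v then {none} else F w
  have fv : f v = {none} := if_pos rfl
  have fw : ∀ w, w ≠ v → f w = F w := fun w hw => if_neg hw
  have hb : ∀ w, (List.replicate (g w) false).length ≤ N + 1 := fun w => by
    have := hN w
    simp; omega
  have hbF : ∀ w, some ⟨_, hb w⟩ ∈ F w := fun w => ⟨_, rfl, 0, by simp⟩
  have cF : ∀ w, Conn (Pgraph (N + 1)) (F w) := by
    intro w
    refine conn_of_root _ (hbF w) ?_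
    have : ∀ j, ∀ h : (List.replicate j true ++ List.replicate (g w) false).length ≤ N + 1,
        Relation.ReflTransGen (Stp (Pgraph (N + 1)) (F w)) (some ⟨_, hb w⟩) (some ⟨_, h⟩) := by
      intro j
      induction j with
      | zero => intro h; exact .refl
      | succ j ih =>
        intro h
        have h' : (List.replicate j true ++ List.replicate (g w) false).length ≤ N + 1 := by
          simp at h ⊢; omega
        refine .tail (ih h') ⟨?_, ⟨_, rfl, j, rfl⟩, ⟨_, rfl, j + 1, rfl⟩⟩
        exact P_adj true _ _ _
    rintro z ⟨⟨x, hx⟩, rfl, j, h⟩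
    simp only at h
    subst h
    exact this j hx
  have c : ∀ w, Conn (Pgraph (N + 1)) (f w) := by
    intro w
    by_cases h : w = v
    · subst h; rw [fv]; exact conn_singleton _ _
    · rw [fw w h]; exact cF w
  have nF : ∀ w, none ∉ F w := by
    rintro w ⟨x, h, -⟩
    simp at h
  have vw : ∀ w, w ≠ v → ∃ a ∈ f v, ∃ b ∈ f w, (Pgraph (N + 1)).Adj a b := by
    intro w hw
    rw [fv, fw w hw]
    have := hN w
    refine ⟨none, rfl, some ⟨List.replicate (N + 1 - g w) true ++ List.replicate (g w) false, ?_⟩,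
      ⟨_, rfl, _, rfl⟩, P_leaf _ ?_⟩
    · simp; omega
    · simp; omega
  have ww : ∀ a b, a ≠ v → b ≠ v → g b = g a + 1 →
      ∃ x ∈ f a, ∃ y ∈ f b, (Pgraph (N + 1)).Adj x y := by
    intro a b ha hb' h
    rw [fw a ha, fw b hb']
    refine ⟨_, hbF a, _, hbF b, ?_⟩
    have e : List.replicate (g b) false = false :: List.replicate (g a) false := by
      rw [h, List.replicate_succ]
    have : (some ⟨_, hb b⟩ : Option (CTVert (N + 1))) =
        some ⟨false :: List.replicate (g a) false, e ▸ hb b⟩ := by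
      simp [e]
    rw [this]
    exact P_adj _ _ _ _
  have sw : ∀ a b, (∃ x ∈ f a, ∃ y ∈ f b, (Pgraph (N + 1)).Adj x y) →
      ∃ x ∈ f b, ∃ y ∈ f a, (Pgraph (N + 1)).Adj x y := by
    rintro a b ⟨x, hx, y, hy, h⟩
    exact ⟨y, hy, x, hx, h.symm⟩
  refine ⟨f, fun w => (c w).nonempty, c, ?_, ?_⟩
  · intro a b hab
    by_cases ha : a = v <;> by_cases hb : b = v
    · exact absurd (ha.trans hb.symm) hab
    · subst ha
      rw [fv, fw b hb, Set.disjoint_singleton_left]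
      exact nF b
    · subst hb
      rw [fv, fw a ha, Set.disjoint_singleton_right]
      exact nF a
    · rw [fw a ha, fw b hb, Set.disjoint_left]
      rintro z ⟨x, rfl, j, hj⟩ ⟨y, hxy, i, hi⟩
      obtain rfl := Option.some.inj hxy
      rw [hj] at hi
      have := congrArg (List.count false) hi
      simp [List.count_replicate] at this
      exact hab (hg1 a b ha hb this)
  · intro a b hab
    by_cases ha : a = v <;> by_cases hb : b = v
    · exact absurd (ha.trans hb.symm) hab.ne
    · subst ha; exact vw b hb
    · subst hb; exact sw _ _ (vw a ha)
    · rcases hg2 a b ha hb hab with h | h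
      · exact sw _ _ (ww b a hb ha h)
      · exact ww a b ha hb h

lemma fan_Q {V : Type*} {H : SimpleGraph V} {v : V} (g : V → ℕ) (N : ℕ) (hN : ∀ w, g w ≤ N)
    (hg1 : ∀ a b, a ≠ v → b ≠ v → g a = g b → a = b)
    (hg2 : ∀ a b, a ≠ v → b ≠ v → H.Adj a b → g a = g b + 1 ∨ g b = g a + 1) :
    IsMinor H (Qgraph (N + 1)) := by
  classical
  have hb : ∀ w, (List.replicate (g w) false).length < N + 1 := fun w => by
    have := hN w
    simp; omega
  let F : V → QVert (N + 1) := fun w => Sum.inr ⟨_, hb w⟩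
  let f : V → QVert (N + 1) := fun w => if w = v then Sum.inl false else F w
  have fv : f v = Sum.inl false := if_pos rfl
  have fw : ∀ w, w ≠ v → f w = F w := fun w hw => if_neg hw
  have vw : ∀ w, w ≠ v → (Qgraph (N + 1)).Adj (f v) (f w) := by
    intro w hw
    rw [fv, fw w hw]
    have h1 := Q_adj1 _ (hb w)
    have h2 := qbase_pre (N + 1) [] (g w)
    rw [List.append_nil] at h2
    rw [h2] at h1
    exact h1.symm
  have ww : ∀ a b, a ≠ v → b ≠ v → g b = g a + 1 → (Qgraph (N + 1)).Adj (f b) (f a) := by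
    intro a b ha hb' h
    rw [fw a ha, fw b hb']
    have h1 := Q_adj2 _ (hb b)
    have h2 := qbase_cons2 (k := N + 1) false _ (hb a)
    rw [← List.replicate_succ, ← h] at h2
    rw [h2] at h1
    exact h1
  refine ⟨fun w => {f w}, fun w => ⟨_, rfl⟩, fun w => conn_singleton _ _, ?_, ?_⟩
  · intro a b hab
    rw [Set.disjoint_singleton]
    by_cases ha : a = v <;> by_cases hb : b = v
    · exact absurd (ha.trans hb.symm) hab
    · subst ha
      rw [fv, fw b hb]; simp [F]
    · subst hb
      rw [fv, fw a ha]; simp [F]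
    · rw [fw a ha, fw b hb]
      intro h
      have := congrArg (fun z => List.length (Subtype.val z)) (Sum.inr.inj h)
      simp at this
      exact hab (hg1 a b ha hb this)
  · intro a b hab
    refine ⟨_, rfl, _, rfl, ?_⟩
    by_cases ha : a = v <;> by_cases hb : b = v
    · exact absurd (ha.trans hb.symm) hab.ne
    · subst ha; exact vw b hb
    · subst hb; exact (vw a ha).symm
    · rcases hg2 a b ha hb hab with h | h
      · exact ww b a hb ha h
      · exact (ww a b ha hb h).symm

lemma induce_minor {V : Type*} (H : SimpleGraph V) (s : Set V) : IsMinor (H.induce s) H := by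
  refine ⟨fun u => {u.1}, fun u => ⟨_, rfl⟩, fun u => conn_singleton _ _, ?_, ?_⟩
  · intro a b hab
    rw [Set.disjoint_singleton]
    exact fun h => hab (Subtype.ext h)
  · intro a b hab
    exact ⟨_, rfl, _, rfl, hab⟩

lemma main_aux : ∀ (N : ℕ) (V : Type) [Fintype V] (H : SimpleGraph V),
    Fintype.card V = N → ¬ IsMinor K4 H → ¬ IsMinor K23 H → ¬ IsMinor C32 H →
    ¬ IsMinor graphA H →
    ∃ k : ℕ, 0 < k ∧ IsMinor H (Pgraph k) ∧ IsMinor H (Qgraph k) := by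
  intro N
  induction N using Nat.strong_induction_on with
  | _ N ih =>
  intro V _ H hN h4 h23 hC hA
  classical
  by_cases hdeg : ∀ x y : V, ∃ w, w ≠ y ∧ H.Adj x w
  · rcases isEmpty_or_nonempty V with hV | hV
    · exact ⟨1, one_pos, ⟨isEmptyElim, isEmptyElim, isEmptyElim, isEmptyElim, isEmptyElim⟩,
        ⟨isEmptyElim, isEmptyElim, isEmptyElim, isEmptyElim, isEmptyElim⟩⟩
    · obtain ⟨v, hv⟩ : ∃ v, ¬ HasCyc H {v}ᶜ := by
        by_contra hcon
        push Not at hcon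
        exact apex_aux _ V H rfl h4 h23 hC hA hcon
      obtain ⟨g, hg1, hg2⟩ := linear_emb (H := H) _ (Finset.univ.erase v) rfl
        (by
          rintro ⟨n, p, h1, h2⟩
          exact hv ⟨n, p, h1, fun i hi => by simpa using h2 i hi⟩)
        (by
          intro t ht b hb c hc d hd hbc hbd hcd
          exact deg_bound hdeg hv h23 (Finset.ne_of_mem_erase ht) (Finset.ne_of_mem_erase hb)
            (Finset.ne_of_mem_erase hc) (Finset.ne_of_mem_erase hd) hbc hbd hcd)
      have m : ∀ a, a ≠ v → a ∈ Finset.univ.erase v := fun a ha => by simpa using ha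
      have hN' : ∀ w, g w ≤ ∑ b, g b := fun w =>
        Finset.single_le_sum (f := g) (fun _ _ => Nat.zero_le _) (Finset.mem_univ w)
      exact ⟨(∑ b, g b) + 1, Nat.succ_pos _,
        fan_P (v := v) g _ hN' (fun a b ha hb => hg1 a (m a ha) b (m b hb))
          (fun a b ha hb => hg2 a (m a ha) b (m b hb)),
        fan_Q (v := v) g _ hN' (fun a b ha hb => hg1 a (m a ha) b (m b hb))
          (fun a b ha hb => hg2 a (m a ha) b (m b hb))⟩
  · push Not at hdeg
    obtain ⟨x, y, hxy⟩ := hdeg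
    have hx : ∀ w, H.Adj x w → w = y := fun w hw => by
      by_contra h
      exact hxy w h hw
    have hm := induce_minor H {x}ᶜ
    obtain ⟨k, hk, hP, hQ⟩ := ih (Fintype.card ({x}ᶜ : Set V))
      (by rw [← hN]; exact Fintype.card_subtype_lt (x := x) (by simp)) ({x}ᶜ : Set V)
      (H.induce {x}ᶜ) rfl
      (fun h => h4 (h.trans' hm)) (fun h => h23 (h.trans' hm)) (fun h => hC (h.trans' hm))
      (fun h => hA (h.trans' hm))
    refine ⟨2 * k + 1, by omega, ?_, ?_⟩
    · exact extend_pendant ⟨none⟩ x y hx hP _ (phiP_model k) (phiP_spare k)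
    · exact extend_pendant ⟨Sum.inl false⟩ x y hx hQ _ (phiQ_model k (2 * k + 1) (by omega))
        (phiQ_spare k hk (by omega))


/-- Corollary 2.5. If a graph `H` has no `K₄`, `K_{2,3}`, `C_{3,2}` or
`A` minor, then there is a `k` such that `H` is isomorphic to a minor of `𝒫_k` and to a
minor of `𝒬_k`. -/
theorem minor_of_Pk_and_Qk_of_no_K4_K23_C32_A_minor {V : Type} [Fintype V]
    (H : SimpleGraph V) (h4 : ¬ IsMinor K4 H) (h23 : ¬ IsMinor K23 H)
    (hC : ¬ IsMinor C32 H) (hA : ¬ IsMinor graphA H) :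
    ∃ k : ℕ, 0 < k ∧ IsMinor H (Pgraph k) ∧ IsMinor H (Qgraph k) := by
  exact main_aux _ V H rfl h4 h23 hC hA
end

section
/- Let p and w be positive integers and let G be a graph of tree-width strictly less than w and path-width at least p. Then for every tree-decomposition (T,X) of G of width strictly less than w, the path-width of the tree T is at least ⌊p/w⌋. -/
/-!
Common definitions: minors, widths, connectivity, the specific graphs
`K4`, `K23`, `C32`, `graphA`, the binary trees `CT_h`, the graphs `𝒫_k`, `𝒬_k`,
the trees `T_h`, homeomorphic embeddings, cascades, and related notions,
following Dang--Thomas, "Minors of two-connected graphs of large path-width".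
-/

open SimpleGraph

/-- A walk from a bag left of `j` to a bag right of `j` meets the bag `j`. -/
theorem walk_meets_bag {T : Type*} {Tr : SimpleGraph T} {n : ℕ} {Y : Fin n → Finset T}
    (hY : IsPathDecomp Tr Y) {a b : T} (q : Tr.Walk a b) :
    ∀ i j k : Fin n, i ≤ j → j ≤ k → a ∈ Y i → b ∈ Y k → ∃ t ∈ q.support, t ∈ Y j := by
  induction q with
  | nil =>
    intro i j k hij hjk ha hb
    exact ⟨_, by simp, hY.2.2 i j k hij hjk _ ha hb⟩
  | cons h q ih =>
    intro i j k hij hjk ha hb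
    obtain ⟨m, hm1, hm2⟩ := hY.2.1 _ _ h
    rcases le_total m j with hmj | hjm
    · obtain ⟨t, ht, htj⟩ := ih m j k hmj hjk hm2 hb
      exact ⟨t, by simp [ht], htj⟩
    · exact ⟨_, by simp, hY.2.2 i j m hij hjm _ ha hm1⟩

/-- Lemma 4.1. Let `p, w` be positive integers and `G` a graph of
tree-width less than `w` and path-width at least `p`. Then for every tree-decomposition
`(T, X)` of `G` of width less than `w`, the path-width of the tree `T` is at least
`⌊p / w⌋`. -/
theorem pathwidth_of_decomposition_tree (p w : ℕ) (hp : 0 < p) (hw : 0 < w)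
    {V : Type} [Fintype V] (G : SimpleGraph V)
    (htw : treewidth G < w) (hpw : p ≤ pathwidth G)
    {T : Type} [Fintype T] (Tr : SimpleGraph T) (X : T → Finset V)
    (hTD : IsTreeDecomp G Tr X) (hwidth : ∀ t, (X t).card ≤ w) :
    p / w ≤ pathwidth Tr := by
  classical
  have hne : {k | ∃ (n : ℕ) (Y : Fin n → Finset T), IsPathDecomp Tr Y ∧
      ∀ i, (Y i).card ≤ k + 1}.Nonempty := by
    refine ⟨Fintype.card T, 1, fun _ => Finset.univ, ⟨?_, ?_, ?_⟩, ?_⟩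
    · intro v; exact ⟨0, Finset.mem_univ _⟩
    · intro u v _; exact ⟨0, Finset.mem_univ _, Finset.mem_univ _⟩
    · intro i j k _ _ v _ _; exact Finset.mem_univ _
    · intro i; simp [Finset.card_univ]
  obtain ⟨n, Y, hY, hcard⟩ := Nat.sInf_mem hne
  change ∀ i, (Y i).card ≤ pathwidth Tr + 1 at hcard
  obtain ⟨hTree, hV, hE, hP⟩ := hTD
  have hpos : 0 < (pathwidth Tr + 1) * w := Nat.mul_pos (Nat.succ_pos _) hw
  have hle : pathwidth G ≤ (pathwidth Tr + 1) * w - 1 := by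
    apply Nat.sInf_le
    refine ⟨n, fun i => (Y i).biUnion X, ⟨?_, ?_, ?_⟩, ?_⟩
    · intro v
      obtain ⟨t, ht⟩ := hV v
      obtain ⟨i, hi⟩ := hY.1 t
      exact ⟨i, Finset.mem_biUnion.2 ⟨t, hi, ht⟩⟩
    · intro u v huv
      obtain ⟨t, hu, hv⟩ := hE u v huv
      obtain ⟨i, hi⟩ := hY.1 t
      exact ⟨i, Finset.mem_biUnion.2 ⟨t, hi, hu⟩, Finset.mem_biUnion.2 ⟨t, hi, hv⟩⟩
    · intro i j k hij hjk v hvi hvk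
      obtain ⟨a, ha, hva⟩ := Finset.mem_biUnion.1 hvi
      obtain ⟨b, hb, hvb⟩ := Finset.mem_biUnion.1 hvk
      obtain ⟨q, hq⟩ := hTree.connected.exists_isPath a b
      obtain ⟨t, ht, htj⟩ := walk_meets_bag hY q i j k hij hjk ha hb
      exact Finset.mem_biUnion.2 ⟨t, htj, hP a t b q hq ht v hva hvb⟩
    · intro i
      have h1 : ((Y i).biUnion X).card ≤ (Y i).card * w :=
        Finset.card_biUnion_le_card_mul _ _ _ (fun t _ => hwidth t)
      have h2 : (Y i).card * w ≤ (pathwidth Tr + 1) * w := Nat.mul_le_mul_right _ (hcard i)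
      show ((Y i).biUnion X).card ≤ _
      omega
  have hlt : p < (pathwidth Tr + 1) * w := by omega
  exact Nat.lt_succ_iff.1 ((Nat.div_lt_iff_lt_mul hw).2 hlt)
end
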